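/- arXiv:2604.22357 — 2 statements merged into one kernel-verified Lean document; each statement's English description precedes it below -/
import Mathlib

section
/- For every graph G without isolated edges, χ'_ocf(G) ≤ χ'_cf(G) ≤ 3⌈log₂ χ(G)⌉ + 17, where χ'_cf(G) is the minimum number of colours in an edge colouring of all edges of G which is simultaneously closed and open conflict-free. -/
open SimpleGraph

/-- The closed neighbourhood of an edge `e`: all edges of `G` sharing a vertex with `e`. -/
def ECN {V : Type*} (G : SimpleGraph V) (e : Sym2 V) : Set (Sym2 V) :=
  {f | f ∈ G.edgeSet ∧ ∃ w, w ∈ f ∧ w ∈ e}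

/-- The open neighbourhood of an edge `e`. -/
def EON {V : Type*} (G : SimpleGraph V) (e : Sym2 V) : Set (Sym2 V) :=
  ECN G e \ {e}

/-- `c` is a closed conflict-free edge colouring of `G` with `k` colours. -/
def ClosedCF {V : Type*} (G : SimpleGraph V) (c : Sym2 V → ℕ) (k : ℕ) : Prop :=
  (∀ e ∈ G.edgeSet, c e < k) ∧
  ∀ e ∈ G.edgeSet, ∃ α, ∃! f, f ∈ ECN G e ∧ c f = α

/-- `c` is an open conflict-free edge colouring of `G` with `k` colours. -/
def OpenCF {V : Type*} (G : SimpleGraph V) (c : Sym2 V → ℕ) (k : ℕ) : Prop :=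
  (∀ e ∈ G.edgeSet, c e < k) ∧
  ∀ e ∈ G.edgeSet, (EON G e).Nonempty → ∃ α, ∃! f, f ∈ EON G e ∧ c f = α

/-- `c` is a conflict-free edge colouring of `G` with `k` colours:
every non-isolated edge `e` has an edge `e'` in its open neighbourhood whose
colour appears on no other edge of the closed neighbourhood of `e`. -/
def ConflictFree {V : Type*} (G : SimpleGraph V) (c : Sym2 V → ℕ) (k : ℕ) : Prop :=
  (∀ e ∈ G.edgeSet, c e < k) ∧
  ∀ e ∈ G.edgeSet, (EON G e).Nonempty →
    ∃ e' ∈ EON G e, ∀ f ∈ ECN G e, c f = c e' → f = e'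

/-- A partial edge colouring of `G` with `k` colours. -/
def PartialColouring {V : Type*} (G : SimpleGraph V) (c : Sym2 V → Option ℕ) (k : ℕ) : Prop :=
  ∀ e α, c e = some α → e ∈ G.edgeSet ∧ α < k

/-- An edge `e` is satisfied by the partial colouring `c`. -/
def SatisfiedP {V : Type*} (G : SimpleGraph V) (c : Sym2 V → Option ℕ) (e : Sym2 V) : Prop :=
  ∃ e' ∈ EON G e, ∃ α, c e' = some α ∧ ∀ f ∈ ECN G e, c f = some α → f = e'

/-- Vertex `v` is incident with a uniquely coloured edge under partial colouring `c`. -/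
def UniqueAt {V : Type*} (G : SimpleGraph V) (c : Sym2 V → Option ℕ) (v : V) : Prop :=
  ∃ e ∈ G.incidenceSet v, ∃ α, c e = some α ∧
    ∀ f ∈ G.incidenceSet v, c f = some α → f = e

/-- `G` is `k`-degenerate: there is a vertex ordering in which every vertex
has at most `k` earlier neighbours. -/
def IsDegenerate {V : Type*} (G : SimpleGraph V) (k : ℕ) : Prop :=
  ∃ f : V ↪ ℕ, ∀ v, {u ∈ G.neighborSet v | f u < f v}.ncard ≤ k

/-- The open conflict-free chromatic index. -/
noncomputable def ocfIndex {V : Type*} (G : SimpleGraph V) : ℕ :=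
  sInf {k | ∃ c, OpenCF G c k}

/-- The closed conflict-free chromatic index. -/
noncomputable def ccfIndex {V : Type*} (G : SimpleGraph V) : ℕ :=
  sInf {k | ∃ c, ClosedCF G c k}

/-- The conflict-free chromatic index. -/
noncomputable def cfIndex {V : Type*} (G : SimpleGraph V) : ℕ :=
  sInf {k | ∃ c, ConflictFree G c k}

/-!
An edge `u v` is satisfied by a colour class having exactly one edge at one of `u`, `v` and no edge
at the other, so it suffices to find few edge-disjoint classes which together satisfy all
non-isolated edges; all remaining edges receive one extra colour.

In a bipartite graph, a minimal set of vertices on one side dominating the other side yields three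
classes which, with a matching `M` of pendant edges as a fourth, satisfy every edge outside `M`. A
Grundy colouring with at most `2 ^ k` colours splits a graph into `k` bipartite layers, according to
the highest bit in which the colours of two adjacent vertices differ. In every layer but that of the
lowest bit, all vertices on one side have at least two neighbours, since they see all smaller
colours. Hence `3 * k + 1` classes satisfy everything but a matching `M` in the lowest layer.

To satisfy `M` too, apply this not to `G` but to the graph left after deleting the edges at an
independent set `I` of maximal degree sum. By maximality, every non-isolated vertex outside `I` has
a neighbour in `I`, so edges from one side of `M` to `I` form a class satisfying `M`. The class `M`
satisfies the edges from its own vertices to `I`, and the bipartite argument, together with a second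
use of the maximality of `I`, satisfies the other edges at `I`.
-/

section ConflictFree

variable {V : Type*}

theorem ConflictFree.openCF {G : SimpleGraph V} {c : Sym2 V → ℕ} {k : ℕ}
    (h : ConflictFree G c k) : OpenCF G c k := by
  refine ⟨h.1, fun e he hne => ?_⟩
  obtain ⟨e', he', huniq⟩ := h.2 e he hne
  exact ⟨c e', e', ⟨he', rfl⟩, fun f hf => huniq f hf.1.1 hf.2⟩

/-- The subgraph of `G` formed by its non-isolated edges. -/
def nonisolatedGraph (G : SimpleGraph V) : SimpleGraph V where
  Adj u v := G.Adj u v ∧ ((∃ w ≠ v, G.Adj u w) ∨ ∃ w ≠ u, G.Adj v w)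
  symm := ⟨fun _ _ h => ⟨h.1.symm, h.2.symm⟩⟩
  loopless := ⟨fun v h => G.loopless.irrefl v h.1⟩

theorem nonisolatedGraph_adj_iff {G : SimpleGraph V} {u v : V} :
    (nonisolatedGraph G).Adj u v ↔ G.Adj u v ∧ (EON G s(u, v)).Nonempty := by
  refine and_congr_right fun _ => ⟨?_, ?_⟩
  · rintro (⟨w, hw, h⟩ | ⟨w, hw, h⟩)
    · exact ⟨s(u, w), ⟨h, u, by simp⟩, fun he => hw (Sym2.congr_right.1 he)⟩
    · exact ⟨s(v, w), ⟨h, v, by simp⟩, fun he => hw (Sym2.congr_right.1 (he.trans Sym2.eq_swap))⟩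
  · rintro ⟨f, ⟨hf, w, hwf, hwe⟩, hne⟩
    obtain ⟨x, rfl⟩ := Sym2.mem_iff_exists.1 hwf
    rcases Sym2.mem_iff.1 hwe with rfl | rfl
    · exact .inl ⟨x, by rintro rfl; exact hne rfl, hf⟩
    · exact .inr ⟨x, by rintro rfl; exact hne Sym2.eq_swap, hf⟩

/-! ### Colour classes -/

/-- The pairs of vertices satisfied by a colour class `C`, viewed as a spanning subgraph: one of
the two vertices lies on exactly one edge of `C` and the other on none. The edge of `C` so singled
out then differs from the pair itself. -/
def satisfiedGraph (C : SimpleGraph V) : SimpleGraph V where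
  Adj u v := (∃! w, C.Adj u w) ∧ v ∉ C.support ∨ (∃! w, C.Adj v w) ∧ u ∉ C.support
  symm := ⟨fun _ _ h => h.symm⟩
  loopless := ⟨fun _ h => h.elim (fun h => h.2 h.1.exists) (fun h => h.2 h.1.exists)⟩

theorem satisfiedGraph_sup_le (C D : SimpleGraph V) :
    satisfiedGraph (C ⊔ D) ≤ satisfiedGraph C ⊔ satisfiedGraph D := by
  have key {u v : V} (hu : ∃! w, (C ⊔ D).Adj u w) (hv : v ∉ (C ⊔ D).support) :
      (satisfiedGraph C ⊔ satisfiedGraph D).Adj u v := by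
    simp only [mem_support, sup_adj, not_exists, not_or] at hv
    obtain ⟨w, hw | hw, huniq⟩ := hu
    · exact .inl (.inl ⟨⟨w, hw, fun w' h => huniq w' (.inl h)⟩, fun ⟨x, hx⟩ => (hv x).1 hx⟩)
    · exact .inr (.inl ⟨⟨w, hw, fun w' h => huniq w' (.inr h)⟩, fun ⟨x, hx⟩ => (hv x).2 hx⟩)
  rintro u v (⟨hu, hv⟩ | ⟨hv, hu⟩)
  · exact key hu hv
  · exact (key hv hu).symm

/-- `Satisfiable F m T`: some partial edge colouring which uses at most `m` colours and colours
edges of `F` only satisfies every edge of `T`. The colouring is encoded by its set of colour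
classes, which are pairwise edge-disjoint subgraphs of `F`. -/
def Satisfiable (F : SimpleGraph V) (m : ℕ) (T : SimpleGraph V) : Prop :=
  ∃ 𝓒 : Finset (SimpleGraph V), 𝓒.card ≤ m ∧ (∀ C ∈ 𝓒, C ≤ F) ∧
    (𝓒 : Set (SimpleGraph V)).PairwiseDisjoint id ∧
    ∀ u v, T.Adj u v → ∃ C ∈ 𝓒, (satisfiedGraph C).Adj u v

namespace Satisfiable

variable {F F' T T' : SimpleGraph V} {m m' : ℕ}

theorem mono (h : Satisfiable F m T) (hF : F ≤ F') (hT : T' ≤ T) : Satisfiable F' m T' := by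
  obtain ⟨𝓒, hcard, hle, hdisj, hsat⟩ := h
  exact ⟨𝓒, hcard, fun C hC => (hle C hC).trans hF, hdisj, fun u v huv => hsat u v (hT huv)⟩

theorem of_satisfiedGraph (C : SimpleGraph V) : Satisfiable C 1 (satisfiedGraph C) :=
  ⟨{C}, by simp, by simp, by simp, by simp⟩

theorem sup (hF : Disjoint F F') (h : Satisfiable F m T) (h' : Satisfiable F' m' T') :
    Satisfiable (F ⊔ F') (m + m') (T ⊔ T') := by
  classical
  obtain ⟨𝓒, hcard, hle, hdisj, hsat⟩ := h
  obtain ⟨𝓒', hcard', hle', hdisj', hsat'⟩ := h'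
  refine ⟨𝓒 ∪ 𝓒', (Finset.card_union_le _ _).trans (by gcongr), fun C hC => ?_, ?_, ?_⟩
  · rcases Finset.mem_union.1 hC with h | h
    · exact (hle C h).trans le_sup_left
    · exact (hle' C h).trans le_sup_right
  · rw [Finset.coe_union, Set.pairwiseDisjoint_union]
    exact ⟨hdisj, hdisj', fun C hC C' hC' _ => hF.mono (hle C hC) (hle' C' hC')⟩
  · rintro u v (huv | huv)
    · obtain ⟨C, hC, hCuv⟩ := hsat u v huv
      exact ⟨C, Finset.mem_union_left _ hC, hCuv⟩
    · obtain ⟨C, hC, hCuv⟩ := hsat' u v huv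
      exact ⟨C, Finset.mem_union_right _ hC, hCuv⟩

theorem finset_sup {ι : Type*} {F T : ι → SimpleGraph V} {s : Finset ι}
    (hF : (s : Set ι).PairwiseDisjoint F) (h : ∀ i ∈ s, Satisfiable (F i) m (T i)) :
    Satisfiable (s.sup F) (s.card * m) (s.sup T) := by
  classical
  induction s using Finset.induction_on with
  | empty => exact ⟨∅, by simp, by simp, by simp, by simp⟩
  | insert i s hi ih =>
    simp only [Finset.coe_insert, Set.pairwiseDisjoint_insert_of_notMem (mt Finset.mem_coe.1 hi),
      Finset.forall_mem_insert] at hF h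
    rw [Finset.sup_insert, Finset.sup_insert, Finset.card_insert_of_notMem hi, add_one_mul,
      add_comm]
    exact h.1.sup (Finset.disjoint_sup_right.2 hF.2) (ih hF.1 h.2)

-- Two overlapping classes are split into their two differences and their intersection.
theorem satisfiedGraph_sup (C D : SimpleGraph V) :
    Satisfiable (C ⊔ D) 3 (satisfiedGraph C ⊔ satisfiedGraph D) := by
  have hCD : Disjoint (C \ D) (D \ C) := disjoint_sdiff_sdiff
  have hinf : Disjoint (C \ D ⊔ D \ C) (C ⊓ D) := disjoint_symmDiff_inf C D
  have h := ((of_satisfiedGraph (C \ D)).sup hCD (of_satisfiedGraph (D \ C))).sup hinf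
    (of_satisfiedGraph (C ⊓ D))
  refine h.mono (sup_le (sup_le_sup sdiff_le sdiff_le) inf_le_sup) (sup_le ?_ ?_)
  · conv_lhs => rw [← sup_sdiff_inf C D]
    exact (satisfiedGraph_sup_le _ _).trans (sup_le_sup_right le_sup_left _)
  · conv_lhs => rw [← sup_sdiff_inf D C, inf_comm]
    exact (satisfiedGraph_sup_le _ _).trans (sup_le_sup_right le_sup_right _)

end Satisfiable

-- Colour `0` is the extra colour, given to all edges left uncoloured by the classes.
theorem exists_colouring_of_pairwiseDisjoint (𝓒 : Finset (SimpleGraph V))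
    (h𝓒 : (𝓒 : Set (SimpleGraph V)).PairwiseDisjoint id) :
    ∃ c : Sym2 V → ℕ, (∀ e, c e < 𝓒.card + 1) ∧
      ∀ C ∈ 𝓒, ∃ α, ∀ e, c e = α ↔ e ∈ C.edgeSet := by
  classical
  let c (e : Sym2 V) : ℕ :=
    if h : ∃ C : 𝓒, e ∈ C.1.edgeSet then 𝓒.equivFin h.choose + 1 else 0
  have hc (C : 𝓒) (e : Sym2 V) (he : e ∈ C.1.edgeSet) : c e = 𝓒.equivFin C + 1 := by
    have h : ∃ C : 𝓒, e ∈ C.1.edgeSet := ⟨C, he⟩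
    have heq : h.choose = C := Subtype.ext <| h𝓒.elim h.choose.2 C.2 fun hdisj =>
      Set.disjoint_left.1 (disjoint_edgeSet.2 hdisj) h.choose_spec he
    simp only [c, dif_pos h, heq]
  refine ⟨c, fun e => ?_, fun C hC => ⟨𝓒.equivFin ⟨C, hC⟩ + 1, fun e => ⟨fun he => ?_, ?_⟩⟩⟩
  · simp only [c]
    split_ifs <;> omega
  · by_cases h : ∃ C : 𝓒, e ∈ C.1.edgeSet
    · simp only [c, dif_pos h, add_left_inj, Fin.val_inj, EmbeddingLike.apply_eq_iff_eq] at he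
      simpa only [he] using h.choose_spec
    · simp only [c, dif_neg h] at he
      omega
  · exact hc ⟨C, hC⟩ e

theorem Satisfiable.exists_conflictFree {G : SimpleGraph V} {m : ℕ}
    (h : Satisfiable G m (nonisolatedGraph G)) : ∃ c, ConflictFree G c (m + 1) := by
  obtain ⟨𝓒, hcard, hle, hdisj, hsat⟩ := h
  obtain ⟨c, hclt, hc⟩ := exists_colouring_of_pairwiseDisjoint 𝓒 hdisj
  have key {C : SimpleGraph V} (hC : C ∈ 𝓒) {u v : V} (hu : ∃! w, C.Adj u w)
      (hv : v ∉ C.support) :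
      ∃ e' ∈ EON G s(u, v), ∀ f ∈ ECN G s(u, v), c f = c e' → f = e' := by
    obtain ⟨α, hα⟩ := hc C hC
    obtain ⟨w, hw, huniq⟩ := hu
    have hwv : s(u, w) ≠ s(u, v) := fun h => hv ⟨u, (Sym2.congr_right.1 h ▸ hw).symm⟩
    refine ⟨s(u, w), ⟨⟨hle C hC hw, u, by simp⟩, hwv⟩, ?_⟩
    rintro f ⟨-, x, hxf, hxe⟩ hf
    rw [(hα s(u, w)).2 hw, hα] at hf
    obtain ⟨y, rfl⟩ := Sym2.mem_iff_exists.1 hxf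
    rcases Sym2.mem_iff.1 hxe with rfl | rfl
    · rw [huniq y hf]
    · exact absurd ⟨y, hf⟩ hv
  refine ⟨c, fun e _ => (hclt e).trans_le (by gcongr), Sym2.ind fun u v huv hne => ?_⟩
  obtain ⟨C, hC, ⟨hu, hv⟩ | ⟨hv, hu⟩⟩ := hsat u v (nonisolatedGraph_adj_iff.2 ⟨huv, hne⟩)
  · exact key hC hu hv
  · rw [Sym2.eq_swap]
    exact key hC hv hu

/-! ### Bipartite graphs -/

section FromRel

variable {X Y : Set V} {R : V → V → Prop} {x y : V}

theorem fromRel_adj_of_mem_left (hXY : Disjoint X Y) (hR : ∀ a b, R a b → a ∈ X ∧ b ∈ Y)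
    (hx : x ∈ X) : (fromRel R).Adj x y ↔ R x y := by
  have := Set.disjoint_left.1 hXY
  grind [fromRel_adj]

theorem fromRel_adj_of_mem_right (hXY : Disjoint X Y) (hR : ∀ a b, R a b → a ∈ X ∧ b ∈ Y)
    (hy : y ∈ Y) : (fromRel R).Adj y x ↔ R x y := by
  have := Set.disjoint_left.1 hXY
  grind [fromRel_adj]

theorem satisfiedGraph_fromRel_adj (hXY : Disjoint X Y) (hR : ∀ a b, R a b → a ∈ X ∧ b ∈ Y)
    (hx : x ∈ X) (hy : y ∈ Y) :
    (satisfiedGraph (fromRel R)).Adj x y ↔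
      (∃! b, R x b) ∧ (∀ a, ¬R a y) ∨ (∃! a, R a y) ∧ ∀ b, ¬R x b := by
  simp only [satisfiedGraph, mem_support, fromRel_adj_of_mem_left hXY hR hx,
    fromRel_adj_of_mem_right hXY hR hy, not_exists]

theorem fromRel_le {H : SimpleGraph V} (hR : ∀ a b, R a b → H.Adj a b) : fromRel R ≤ H := by
  rintro a b ⟨-, h | h⟩
  · exact hR a b h
  · exact (hR b a h).symm

theorem disjoint_fromRel {R' : V → V → Prop} (hXY : Disjoint X Y)
    (hR : ∀ a b, R a b → a ∈ X ∧ b ∈ Y) (hR' : ∀ a b, R' a b → a ∈ X ∧ b ∈ Y)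
    (h : ∀ a b, R a b → ¬R' a b) : Disjoint (fromRel R) (fromRel R') := by
  have := Set.disjoint_left.1 hXY
  rw [SimpleGraph.disjoint_left]
  grind [fromRel_adj]

end FromRel

theorem exists_minimal_dominating [Finite V] (H : SimpleGraph V) (X : Set V) :
    ∃ D ⊆ X, (∀ x ∈ X, ∀ y, H.Adj x y → ∃ d ∈ D, H.Adj d y) ∧
      ∀ d ∈ D, ∃ y, H.Adj d y ∧ ∀ d' ∈ D, H.Adj d' y → d' = d := by
  let Dominates (D : Set V) : Prop := D ⊆ X ∧ ∀ x ∈ X, ∀ y, H.Adj x y → ∃ d ∈ D, H.Adj d y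
  obtain ⟨D, hD⟩ := (Set.toFinite {D | Dominates D}).exists_minimal
    ⟨X, subset_rfl, fun x hx y hxy => ⟨x, hx, hxy⟩⟩
  refine ⟨D, hD.prop.1, hD.prop.2, fun d hd => ?_⟩
  by_contra! hno
  have hdom : Dominates (D \ {d}) := by
    refine ⟨Set.sdiff_subset.trans hD.prop.1, fun x hx y hxy => ?_⟩
    obtain ⟨e, he, hey⟩ := hD.prop.2 x hx y hxy
    by_cases hed : e = d
    · obtain ⟨d', hd', hd'y, hne⟩ := hno y (hed ▸ hey)
      exact ⟨d', ⟨hd', hne⟩, hd'y⟩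
    · exact ⟨e, ⟨he, hed⟩, hey⟩
  exact (hD.le_of_le hdom Set.sdiff_subset hd).2 rfl

/-- The choices from which a bipartite graph `H` with one side `X` is coloured. The `centres` form
a minimal subset of `X` dominating all neighbours of `X`. A centre `x` has a private neighbour
`priv x`, dominated by no other centre, and a neighbour `second x`, which is different from `priv x`
unless `x` is a leaf. Each neighbour `y` of `X` is dominated by the centre `dom y`, taken
among the centres `x` with `second x = y` if there are any. -/
structure DominatingSystem (H : SimpleGraph V) (X : Set V) where
  centres : Set V
  priv : V → V
  second : V → V
  dom : V → V
  centres_subset : centres ⊆ X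
  adj_priv : ∀ {x}, x ∈ centres → H.Adj x (priv x)
  adj_second : ∀ {x}, x ∈ centres → H.Adj x (second x)
  dom_mem : ∀ {x y}, x ∈ X → H.Adj x y → dom y ∈ centres
  adj_dom : ∀ {x y}, x ∈ X → H.Adj x y → H.Adj (dom y) y
  eq_of_adj_priv : ∀ {x x'}, x ∈ centres → x' ∈ centres → H.Adj x' (priv x) → x' = x
  eq_priv_of_adj : ∀ {x y}, x ∈ centres → second x = priv x → H.Adj x y → y = priv x
  second_dom : ∀ {x}, x ∈ centres → second (dom (second x)) = second x

theorem nonempty_dominatingSystem [Finite V] (H : SimpleGraph V) (X : Set V) :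
    Nonempty (DominatingSystem H X) := by
  obtain ⟨D, hDX, hdom, hpriv⟩ := exists_minimal_dominating H X
  choose! priv hpriv using hpriv
  have hsecond : ∀ x ∈ D, ∃ y, H.Adj x y ∧ (y = priv x → ∀ y', H.Adj x y' → y' = priv x) := by
    intro x hx
    by_cases h : ∃ y, H.Adj x y ∧ y ≠ priv x
    · exact h.imp fun y hy => ⟨hy.1, fun h => absurd h hy.2⟩
    · push Not at h
      exact ⟨priv x, (hpriv x hx).1, fun _ => h⟩
  choose! second hsecond using hsecond
  have hdom : ∀ y, (∃ x ∈ X, H.Adj x y) → ∃ d, (d ∈ D ∧ H.Adj d y) ∧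
      ∀ x ∈ D, second x = y → second d = y := by
    rintro y ⟨x, hx, hxy⟩
    by_cases hy : ∃ x' ∈ D, second x' = y
    · obtain ⟨x', hx', rfl⟩ := hy
      exact ⟨x', ⟨hx', (hsecond x' hx').1⟩, fun _ _ _ => rfl⟩
    · push Not at hy
      obtain ⟨d, hd⟩ := hdom x hx y hxy
      exact ⟨d, hd, fun x' hx' h => absurd h (hy x' hx')⟩
  choose! dom hdom using hdom
  exact ⟨{
    centres := D
    priv := priv
    second := second
    dom := dom
    centres_subset := hDX
    adj_priv := fun hx => (hpriv _ hx).1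
    adj_second := fun hx => (hsecond _ hx).1
    dom_mem := fun hx hxy => (hdom _ ⟨_, hx, hxy⟩).1.1
    adj_dom := fun hx hxy => (hdom _ ⟨_, hx, hxy⟩).1.2
    eq_of_adj_priv := fun hx hx' h => (hpriv _ hx).2 _ hx' h
    eq_priv_of_adj := fun hx h hxy => (hsecond _ hx).2 h _ hxy
    second_dom := fun hx => (hdom _ ⟨_, hDX hx, (hsecond _ hx).1⟩).2 _ hx rfl }⟩

namespace DominatingSystem

variable {H : SimpleGraph V} {X Y : Set V} (S : DominatingSystem H X) {b b' : Bool} {x x' y : V}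

/-- The edges joining a centre with at least two neighbours to its private neighbour. -/
def privArc (x y : V) : Prop :=
  x ∈ S.centres ∧ y = S.priv x ∧ S.second x ≠ S.priv x

/-- The edges joining a centre with only one neighbour to this neighbour. -/
def leafArc (x y : V) : Prop :=
  x ∈ S.centres ∧ y = S.priv x ∧ S.second x = S.priv x

/-- The remaining edges to be coloured, split into two classes. A centre `x` sends an edge to
`second x`, in class `true` exactly if `x` dominates `second x`, and edges in the opposite class to
the other vertices it dominates. -/
def secondArc (b : Bool) (x y : V) : Prop :=
  x ∈ S.centres ∧ S.second x ≠ S.priv x ∧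
    (y = S.second x ∧ (S.dom y = x ↔ b) ∨
      H.Adj x y ∧ S.dom y = x ∧ S.priv x ≠ y ∧ S.second x ≠ y ∧ (S.dom (S.second x) = x ↔ !b))

variable {S}

theorem privArc.adj (h : S.privArc x y) : H.Adj x y := h.2.1 ▸ S.adj_priv h.1

theorem leafArc.adj (h : S.leafArc x y) : H.Adj x y := h.2.1 ▸ S.adj_priv h.1

theorem secondArc.adj (h : S.secondArc b x y) : H.Adj x y := by
  obtain ⟨hx, -, ⟨rfl, -⟩ | ⟨hxy, -⟩⟩ := h
  · exact S.adj_second hx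
  · exact hxy

theorem leafArc.eq_of_adj (h : S.leafArc x y) {y' : V} (hxy : H.Adj x y') : y' = y :=
  (S.eq_priv_of_adj h.1 h.2.2 hxy).trans h.2.1.symm

theorem leafArc.eq_of_mem_centres (h : S.leafArc x y) (hx' : x' ∈ S.centres)
    (hxy : H.Adj x' y) : x' = x :=
  S.eq_of_adj_priv h.1 hx' (h.2.1 ▸ hxy)

theorem privArc.not_leafArc (h : S.privArc x y) : ¬S.leafArc x y :=
  fun h' => h.2.2 h'.2.2

theorem privArc.not_secondArc (h : S.privArc x y) : ¬S.secondArc b x' y := by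
  intro h'
  have := S.eq_of_adj_priv h.1 h'.1 (h.2.1 ▸ h'.adj)
  grind [privArc, secondArc]

theorem secondArc.not_leafArc (h : S.secondArc b x y) : ¬S.leafArc x y :=
  fun h' => h.2.1 h'.2.2

theorem secondArc.eq_bool (h : S.secondArc b x y) (h' : S.secondArc b' x y) : b = b' := by
  grind [secondArc]

theorem existsUnique_secondArc (h : S.privArc x y) : ∃ b, ∃! z, S.secondArc b x z := by
  by_cases hx : S.dom (S.second x) = x
  · exact ⟨true, S.second x, by grind [secondArc, privArc], by grind [secondArc]⟩
  · exact ⟨false, S.second x, by grind [secondArc, privArc], by grind [secondArc]⟩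

theorem existsUnique_privArc (hx : x ∈ S.centres) (hxy : H.Adj x y) (h : ¬S.leafArc x y)
    (h' : ¬S.privArc x y) : (∃! z, S.privArc x z) ∧ ∀ x', ¬S.privArc x' y := by
  have := @S.eq_priv_of_adj x y hx
  refine ⟨⟨S.priv x, by grind [privArc, leafArc], by grind [privArc]⟩, fun x' hx' => ?_⟩
  have := S.eq_of_adj_priv hx'.1 hx (hx'.2.1 ▸ hxy)
  exact h' (this ▸ hx')

theorem existsUnique_arc_dom (hx : x ∈ X) (hxy : H.Adj x y) :
    (∃! z, S.privArc z y) ∨ (∃! z, S.leafArc z y) ∨ ∃ b, ∃! z, S.secondArc b z y := by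
  have hd := S.dom_mem hx hxy
  have hdy := S.adj_dom hx hxy
  by_cases hpriv : y = S.priv (S.dom y)
  · have huniq : ∀ z ∈ S.centres, H.Adj z y → z = S.dom y := fun z hz hzy =>
      S.eq_of_adj_priv hd hz (hpriv ▸ hzy)
    by_cases hbr : S.second (S.dom y) = S.priv (S.dom y)
    · exact .inr <| .inl ⟨S.dom y, ⟨hd, hpriv, hbr⟩, fun z hz => huniq z hz.1 hz.adj⟩
    · exact .inl ⟨S.dom y, ⟨hd, hpriv, hbr⟩, fun z hz => huniq z hz.1 hz.adj⟩
  have hbr : S.second (S.dom y) ≠ S.priv (S.dom y) := fun h => hpriv (S.eq_priv_of_adj hd h hdy)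
  by_cases hsec : y = S.second (S.dom y)
  · exact .inr <| .inr ⟨true, S.dom y, ⟨hd, hbr, .inl ⟨hsec, by simp⟩⟩, by grind [secondArc]⟩
  · have hno : ∀ z ∈ S.centres, S.second z ≠ y := by
      rintro z hz rfl
      exact hsec (S.second_dom hz).symm
    obtain ⟨b, hb⟩ : ∃ b : Bool, S.dom (S.second (S.dom y)) = S.dom y ↔ !b := by simp [em]
    exact .inr <| .inr ⟨b, S.dom y, ⟨hd, hbr, .inr ⟨hdy, rfl, Ne.symm hpriv, Ne.symm hsec, hb⟩⟩,
      by grind [secondArc]⟩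

variable (S) in
theorem mem_of_adj (hH : H.IsBipartiteWith X Y) (hx : x ∈ S.centres) (hxy : H.Adj x y) :
    x ∈ X ∧ y ∈ Y :=
  ⟨S.centres_subset hx, hH.mem_of_mem_adj (S.centres_subset hx) hxy⟩

variable (S) in
theorem satisfiedGraph_arcs_adj (hH : H.IsBipartiteWith X Y) (hxy : H.Adj x y)
    (h : ¬(fromRel S.leafArc).Adj x y) :
    (satisfiedGraph (fromRel S.leafArc)).Adj x y ∨ (satisfiedGraph (fromRel S.privArc)).Adj x y ∨
      ∃ b, (satisfiedGraph (fromRel (S.secondArc b))).Adj x y := by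
  wlog hx : x ∈ X generalizing x y
  · have hy : y ∈ X := (hH.mem_of_adj hxy).elim (fun h => absurd h.1 hx) (·.2)
    simpa only [SimpleGraph.adj_comm] using this hxy.symm (mt SimpleGraph.Adj.symm h) hy
  have hy := hH.mem_of_mem_adj hx hxy
  have hpriv (u v) (h : S.privArc u v) := S.mem_of_adj hH h.1 h.adj
  have hleaf (u v) (h : S.leafArc u v) := S.mem_of_adj hH h.1 h.adj
  have hsecond (b u v) (h : S.secondArc b u v) := S.mem_of_adj hH h.1 h.adj
  rw [fromRel_adj_of_mem_left hH.disjoint hleaf hx] at h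
  simp only [satisfiedGraph_fromRel_adj hH.disjoint hleaf hx hy,
    satisfiedGraph_fromRel_adj hH.disjoint hpriv hx hy,
    satisfiedGraph_fromRel_adj hH.disjoint (hsecond _) hx hy]
  by_cases hxS : x ∈ S.centres
  · by_cases hp : S.privArc x y
    · obtain ⟨b, hb⟩ := existsUnique_secondArc hp
      exact .inr <| .inr ⟨b, .inl ⟨hb, fun _ => hp.not_secondArc⟩⟩
    · exact .inr <| .inl <| .inl <| existsUnique_privArc hxS hxy h hp
  · rcases existsUnique_arc_dom hx hxy with h | h | ⟨b, h⟩
    · exact .inr <| .inl <| .inr ⟨h, fun _ h => hxS h.1⟩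
    · exact .inl <| .inr ⟨h, fun _ h => hxS h.1⟩
    · exact .inr <| .inr ⟨b, .inr ⟨h, fun _ h => hxS h.1⟩⟩

end DominatingSystem

-- The classes are `privArc` and the two classes of `secondArc`, and `M` consists of the `leafArc`s.
theorem exists_satisfiable_of_isBipartiteWith [Finite V] {H : SimpleGraph V} {X Y : Set V}
    (hH : H.IsBipartiteWith X Y) :
    ∃ F M, F ≤ H ∧ M ≤ H ∧ Disjoint F M ∧ Satisfiable F 3 (H \ (M ⊔ satisfiedGraph M)) ∧
      ∀ x ∈ X, ∀ y, M.Adj x y →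
        (∀ y', H.Adj x y' → y' = y) ∧ ∀ x', (F ⊔ M).Adj x' y → x' = x := by
  obtain ⟨S⟩ := nonempty_dominatingSystem H X
  have hpriv (u v) (h : S.privArc u v) := S.mem_of_adj hH h.1 h.adj
  have hleaf (u v) (h : S.leafArc u v) := S.mem_of_adj hH h.1 h.adj
  have hsecond (b u v) (h : S.secondArc b u v) := S.mem_of_adj hH h.1 h.adj
  refine ⟨fromRel S.privArc ⊔ fromRel (S.secondArc true) ⊔ fromRel (S.secondArc false),
    fromRel S.leafArc, sup_le (sup_le ?_ ?_) ?_, ?_, ?_, ?_, ?_⟩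
  · exact fromRel_le fun _ _ h => h.adj
  · exact fromRel_le fun _ _ h => h.adj
  · exact fromRel_le fun _ _ h => h.adj
  · exact fromRel_le fun _ _ h => h.adj
  · rw [disjoint_sup_left, disjoint_sup_left]
    exact ⟨⟨disjoint_fromRel hH.disjoint hpriv hleaf fun _ _ h => h.not_leafArc,
      disjoint_fromRel hH.disjoint (hsecond _) hleaf fun _ _ h => h.not_leafArc⟩,
      disjoint_fromRel hH.disjoint (hsecond _) hleaf fun _ _ h => h.not_leafArc⟩
  · have hdisj (b) : Disjoint (fromRel S.privArc) (fromRel (S.secondArc b)) :=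
      disjoint_fromRel hH.disjoint hpriv (hsecond b) fun _ _ h => h.not_secondArc
    have hdisj' : Disjoint (fromRel (S.secondArc true)) (fromRel (S.secondArc false)) :=
      disjoint_fromRel hH.disjoint (hsecond _) (hsecond _) fun _ _ h h' => by
        simpa using h.eq_bool h'
    refine (((Satisfiable.of_satisfiedGraph _).sup (hdisj _)
      (.of_satisfiedGraph _)).sup ((hdisj _).sup_left hdisj')
      (.of_satisfiedGraph _)).mono le_rfl fun u v huv => ?_
    simp only [sdiff_adj, sup_adj, not_or] at huv
    have := S.satisfiedGraph_arcs_adj hH huv.1 huv.2.1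
    simp only [huv.2.2, false_or, Bool.exists_bool] at this
    exact or_assoc.2 (this.imp_right Or.symm)
  · intro x hx y hxy
    rw [fromRel_adj_of_mem_left hH.disjoint hleaf hx] at hxy
    have hy := (hleaf _ _ hxy).2
    refine ⟨fun y' => hxy.eq_of_adj, fun x' hx' => ?_⟩
    simp only [SimpleGraph.adj_comm _ x', sup_adj, fromRel_adj_of_mem_right hH.disjoint hpriv hy,
      fromRel_adj_of_mem_right hH.disjoint hleaf hy,
      fromRel_adj_of_mem_right hH.disjoint (hsecond _) hy] at hx'
    rcases hx' with ((h | h) | h) | h <;> exact hxy.eq_of_mem_centres h.1 h.adj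

/-! ### Grundy colourings -/

/-- A proper colouring by natural numbers in which each vertex sees all colours smaller than its
own. -/
structure IsGrundyColouring (H : SimpleGraph V) (c : V → ℕ) : Prop where
  ne_of_adj : ∀ {u v}, H.Adj u v → c u ≠ c v
  exists_adj_eq : ∀ {v j}, j < c v → ∃ u, H.Adj v u ∧ c u = j

theorem exists_isGrundyColouring [Finite V] {H : SimpleGraph V} {n : ℕ} (hH : H.Colorable n) :
    ∃ c, IsGrundyColouring H c ∧ ∀ v, c v < n := by
  classical
  let P : Set (V → ℕ) := {c | (∀ u v, H.Adj u v → c u ≠ c v) ∧ ∀ v, c v < n}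
  have hP : P.Nonempty := by
    obtain ⟨C⟩ := hH
    exact ⟨fun v => C v, fun u v huv => Fin.val_ne_of_ne (C.valid huv), fun v => (C v).is_lt⟩
  obtain ⟨c, hc⟩ := exists_minimal_of_wellFoundedLT (· ∈ P) hP
  refine ⟨c, ⟨fun {u v} => hc.prop.1 u v, fun {v j} hj => ?_⟩, hc.prop.2⟩
  by_contra! hno
  have hupdate : Function.update c v j ∈ P := by
    refine ⟨fun a b hab => ?_, fun a => ?_⟩
    · have := hc.prop.1 a b hab
      have := hab.symm
      grind [Function.update_apply]
    · have := hc.prop.2 a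
      grind [Function.update_apply]
  exact hj.not_ge (by simpa using hc.le_of_le hupdate (update_le_self_iff.2 hj.le) v)

theorem xor_lt_of_testBit_log2 {a r : ℕ} (hr : r ≠ 0) (h : a.testBit r.log2) :
    a ^^^ r < a := by
  refine Nat.lt_of_testBit r.log2 ?_ h fun j hj => ?_
  · simp [Nat.testBit_xor, h, Nat.testBit_log2 hr]
  · simp [Nat.testBit_xor, Nat.testBit_lt_two_pow ((Nat.log2_lt hr).1 hj)]

/-- The edges of `H` for which `i` is the highest position in which the binary expansions of the
colours of the two ends differ. -/
def bitLayer (H : SimpleGraph V) (c : V → ℕ) (i : ℕ) : SimpleGraph V where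
  Adj u v := H.Adj u v ∧ (c u ^^^ c v).log2 = i
  symm := ⟨fun u v h => ⟨h.1.symm, by rw [Nat.xor_comm, h.2]⟩⟩
  loopless := ⟨fun v h => H.loopless.irrefl v h.1⟩

section BitLayer

variable {H : SimpleGraph V} {c : V → ℕ} {i : ℕ}

theorem bitLayer_le : bitLayer H c i ≤ H := fun _ _ h => h.1

theorem pairwise_disjoint_bitLayer (H : SimpleGraph V) (c : V → ℕ) :
    Pairwise (Function.onFun Disjoint (bitLayer H c)) := fun _ _ hij =>
  SimpleGraph.disjoint_left.2 fun _ _ h h' => hij (h.2.symm.trans h'.2)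

theorem bitLayer_isBipartiteWith (hc : ∀ {u v}, H.Adj u v → c u ≠ c v) :
    (bitLayer H c i).IsBipartiteWith {v | (c v).testBit i} {v | ¬(c v).testBit i} where
  disjoint := Set.disjoint_left.2 fun _ h h' => h' h
  mem_of_adj u v h := by
    obtain ⟨h, rfl⟩ := h
    have := Nat.testBit_log2 (Nat.xor_ne_zero_iff.2 (hc h))
    rw [Nat.testBit_xor] at this
    grind

theorem exists_bitLayer_adj (hc : ∀ {u v}, H.Adj u v → c u ≠ c v) {k : ℕ}
    (hk : ∀ v, c v < 2 ^ k) {u v : V} (h : H.Adj u v) : ∃ i < k, (bitLayer H c i).Adj u v :=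
  ⟨_, (Nat.log2_lt (Nat.xor_ne_zero_iff.2 (hc h))).2 (Nat.xor_lt_two_pow (hk u) (hk v)), h, rfl⟩

theorem IsGrundyColouring.exists_ne_bitLayer_adj (hc : IsGrundyColouring H c) (hi : i ≠ 0)
    {x : V} (hx : (c x).testBit i) (y : V) : ∃ y' ≠ y, (bitLayer H c i).Adj x y' := by
  have key (r : ℕ) (hr : r ≠ 0) (hri : r.log2 = i) :
      ∃ u, (bitLayer H c i).Adj x u ∧ c u = c x ^^^ r := by
    obtain ⟨u, hxu, hu⟩ := hc.exists_adj_eq (xor_lt_of_testBit_log2 hr (hri ▸ hx))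
    refine ⟨u, ⟨hxu, by rwa [hu, Nat.xor_xor_cancel_left]⟩, hu⟩
  obtain ⟨u, hxu, hu⟩ := key (2 ^ i) (by simp) (by simp)
  have hlog : (2 ^ i + 1).log2 = i := by
    have := Nat.one_lt_two_pow hi
    rw [Nat.log2_eq_iff (by simp), pow_succ]
    omega
  obtain ⟨v, hxv, hv⟩ := key (2 ^ i + 1) (by simp) hlog
  have huv : u ≠ v := by
    rintro rfl
    have := Nat.xor_right_injective (hu.symm.trans hv)
    omega
  by_cases huy : u = y
  · exact ⟨v, huy ▸ huv.symm, hxv⟩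
  · exact ⟨u, huy, hxu⟩

-- If `i ≠ 0`, then each vertex of one side of the layer has two neighbours in it.
theorem IsGrundyColouring.exists_satisfiable_bitLayer [Finite V] (hc : IsGrundyColouring H c)
    (i : ℕ) :
    ∃ F M, F ≤ bitLayer H c i ∧ M ≤ bitLayer H c i ∧ Disjoint F M ∧
      Satisfiable F 3 (bitLayer H c i \ (M ⊔ satisfiedGraph M)) ∧
      (∀ u v w, M.Adj u v → M.Adj u w → v = w) ∧ (i ≠ 0 → M = ⊥) := by
  have hbip := bitLayer_isBipartiteWith (i := i) hc.ne_of_adj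
  obtain ⟨F, M, hF, hM, hFM, hsat, hpendant⟩ := exists_satisfiable_of_isBipartiteWith hbip
  refine ⟨F, M, hF, hM, hFM, hsat, fun u v w huv huw => ?_, fun hi => ?_⟩
  · rcases hbip.mem_of_adj (hM huv) with ⟨hu, -⟩ | ⟨-, hv⟩
    · exact ((hpendant u hu v huv).1 w (hM huw)).symm
    · exact ((hpendant v hv u huv.symm).2 w (.inr huw.symm)).symm
  · refine eq_bot_iff_forall_not_adj.2 fun u v huv => ?_
    wlog hu : (c u).testBit i generalizing u v
    · exact this v u huv.symm ((hbip.mem_of_adj (hM huv)).resolve_left fun h => hu h.1).2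
    obtain ⟨w, hne, hw⟩ := hc.exists_ne_bitLayer_adj hi hu v
    exact hne ((hpendant u hu v huv).1 w hw)

end BitLayer

theorem IsGrundyColouring.exists_satisfiable [Finite V] {H : SimpleGraph V} {c : V → ℕ} {k : ℕ}
    (hc : IsGrundyColouring H c) (hk : ∀ v, c v < 2 ^ k) :
    ∃ F M, F ≤ H ∧ M ≤ H ∧ Disjoint F M ∧
      Satisfiable F (3 * k) (H \ (M ⊔ satisfiedGraph M)) ∧
      (∀ u v w, M.Adj u v → M.Adj u w → v = w) ∧ ∃ X Y, M.IsBipartiteWith X Y := by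
  choose F M hF hM hFM hsat hmatching hbot using hc.exists_satisfiable_bitLayer
  have hbip := bitLayer_isBipartiteWith (i := 0) hc.ne_of_adj
  refine ⟨(Finset.range k).sup F, M 0, Finset.sup_le fun i _ => (hF i).trans bitLayer_le,
    (hM 0).trans bitLayer_le, Finset.disjoint_sup_left.2 fun i _ => ?_, ?_, hmatching 0,
    _, _, hbip.disjoint, fun u v huv => hbip.mem_of_adj (hM 0 huv)⟩
  · rcases eq_or_ne i 0 with rfl | hi
    · exact hFM 0
    · exact (pairwise_disjoint_bitLayer H c hi).mono (hF i) (hM 0)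
  · have hdisj : (Finset.range k : Set ℕ).PairwiseDisjoint F := fun i _ j _ hij =>
      (pairwise_disjoint_bitLayer H c hij).mono (hF i) (hF j)
    have := Satisfiable.finset_sup hdisj fun i _ => hsat i
    rw [Finset.card_range, mul_comm] at this
    refine this.mono le_rfl fun u v ⟨huv, hnot⟩ => ?_
    obtain ⟨i, hik, hi⟩ := exists_bitLayer_adj hc.ne_of_adj hk huv
    refine Finset.le_sup (f := fun i => bitLayer H c i \ (M i ⊔ satisfiedGraph (M i)))
      (Finset.mem_range.2 hik) ⟨hi, ?_⟩
    rcases eq_or_ne i 0 with rfl | hi0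
    · exact hnot
    · simp [hbot i hi0, satisfiedGraph]

/-! ### Robust independent sets -/

/-- An independent set `I` dominating all other non-isolated vertices, such that the neighbour of a
leaf in `I` has a second neighbour in `I` unless it is a leaf itself. -/
structure IsRobustIndepSet (G : SimpleGraph V) (I : Set V) : Prop where
  isIndepSet : G.IsIndepSet I
  exists_adj : ∀ {v u}, v ∉ I → G.Adj v u → ∃ z ∈ I, G.Adj v z
  exists_ne_adj : ∀ {z w u}, z ∈ I → (∀ w', G.Adj z w' ↔ w' = w) → u ≠ z → G.Adj w u →
    ∃ z' ∈ I, z' ≠ z ∧ G.Adj w z'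

-- Among the independent sets, choose one with maximal degree sum.
theorem exists_isRobustIndepSet [Finite V] (G : SimpleGraph V) : ∃ I, IsRobustIndepSet G I := by
  classical
  have := Fintype.ofFinite V
  obtain ⟨I, hI, hmax⟩ := Finset.exists_max_image
    (Finset.univ.filter fun I : Finset V => G.IsIndepSet I) (fun I => ∑ v ∈ I, G.degree v)
    ⟨∅, by simp [IsIndepSet]⟩
  simp only [Finset.mem_filter, Finset.mem_univ, true_and] at hI hmax
  have hinsert {v : V} {J : Finset V} (hJ : J ⊆ I) (hv : v ∉ I) (h : ∀ z ∈ J, ¬G.Adj v z) :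
      ∑ u ∈ J, G.degree u + G.degree v ≤ ∑ u ∈ I, G.degree u := by
    rw [add_comm, ← Finset.sum_insert (f := fun v => G.degree v) (mt (@hJ v) hv)]
    refine hmax _ ?_
    rw [Finset.coe_insert, IsIndepSet, Set.pairwise_insert]
    exact ⟨hI.mono hJ, fun z hz _ => ⟨h z hz, fun hzv => h z hz hzv.symm⟩⟩
  refine ⟨I, hI, fun {v u} hv huv => ?_, fun {z w u} hz hzw hu hwu => ?_⟩
  · by_contra! h
    have := hinsert subset_rfl hv h
    have := (G.degree_pos_iff_exists_adj v).2 ⟨u, huv⟩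
    omega
  · by_contra! h
    have hwz : G.Adj z w := (hzw w).2 rfl
    have hle := hinsert (I.erase_subset z) (fun hw => hI hz hw hwz.ne hwz)
      fun z' hz' => h z' (Finset.mem_of_mem_erase hz') (Finset.ne_of_mem_erase hz')
    have hz1 : G.degree z = 1 :=
      degree_eq_one_iff_existsUnique_adj.2 ⟨w, hwz, fun w' => (hzw w').1⟩
    have hw2 : 1 < G.degree w := by
      rw [← card_neighborFinset_eq_degree]
      exact Finset.one_lt_card.2 ⟨u, by simpa using hwu, z, by simpa using hwz.symm, hu⟩
    have := Finset.add_sum_erase I (fun v => G.degree v) hz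
    omega

theorem exists_le_satisfiedGraph_of_isBipartiteWith {H T : SimpleGraph V} {X Y : Set V}
    (hT : T.IsBipartiteWith X Y) (hH : ∀ x ∈ X, x ∈ T.support → x ∈ H.support)
    (hindep : H.IsIndepSet T.support) : ∃ C ≤ H, T ≤ satisfiedGraph C := by
  choose! g hg using hH
  let R (x y : V) : Prop := (x ∈ X ∧ x ∈ T.support) ∧ y = g x
  have hRH (x y) (h : R x y) : H.Adj x y := h.2 ▸ hg x h.1.1 h.1.2
  have hRT (x y) (h : R x y) : x ∈ T.support ∧ y ∈ T.supportᶜ :=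
    ⟨h.1.2, fun hy => hindep h.1.2 hy (hRH x y h).ne (hRH x y h)⟩
  refine ⟨fromRel R, fromRel_le hRH, fun x y hxy => ?_⟩
  wlog hx : x ∈ X generalizing x y
  · exact (this y x hxy.symm ((hT.mem_of_adj hxy).resolve_left fun h => hx h.1).2).symm
  have hx' : x ∈ T.support := ⟨y, hxy⟩
  have hy' : y ∈ T.support := ⟨x, hxy.symm⟩
  have hy : y ∉ X := fun h => Set.disjoint_left.1 hT.disjoint h (hT.mem_of_mem_adj hx hxy)
  simp only [satisfiedGraph, mem_support, fromRel_adj_of_mem_left disjoint_compl_right hRT hx',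
    fromRel_adj_of_mem_left disjoint_compl_right hRT hy']
  exact .inl ⟨⟨g x, ⟨⟨hx, hx'⟩, rfl⟩, fun b hb => hb.2⟩, fun ⟨b, hb⟩ => hy hb.1.1⟩

section IsRobustIndepSet

variable {G F M N : SimpleGraph V} {X Y W I : Set V}

theorem IsRobustIndepSet.exists_ne_adj_of_nonisolated (hI : IsRobustIndepSet G I) {w z : V}
    (hw : w ∈ W) (hz : z ∈ I) (hwz : (nonisolatedGraph G).Adj w z)
    (huniq : ∀ z', (G.between W I).Adj w z' → z' = z) : ∃ a ≠ w, G.Adj z a := by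
  by_contra! h
  obtain ⟨u, huz, hwu⟩ := hwz.2.resolve_right fun ⟨a, ha, hza⟩ => h a ha hza
  have hleaf (a : V) : G.Adj z a ↔ a = w :=
    ⟨fun ha => by_contra fun hne => h a hne ha, fun ha => ha ▸ hwz.1.symm⟩
  obtain ⟨z', hz', hzz', hwz'⟩ := hI.exists_ne_adj hz hleaf huz hwu
  exact hzz' (huniq z' ⟨hwz', .inl ⟨hw, hz'⟩⟩)

-- An edge `w z` of `N` with `z ∈ I` is satisfied by an edge from `z` to a vertex other than `w`.
theorem IsRobustIndepSet.exists_inf_le_satisfiedGraph (hI : IsRobustIndepSet G I)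
    (hWI : Disjoint W I) (hN : N ≤ G.between W I)
    (hpendant : ∀ w ∈ W, ∀ z, N.Adj w z →
      (∀ z', (G.between W I).Adj w z' → z' = z) ∧ ∀ w', (F ⊔ N).Adj w' z → w' = w) :
    ∃ K ≤ G.between Iᶜ I \ (F ⊔ N), N ⊓ nonisolatedGraph G ≤ satisfiedGraph K := by
  have hbip := between_isBipartiteWith (G := G) hWI
  refine exists_le_satisfiedGraph_of_isBipartiteWith (X := I) (Y := W)
    ⟨hWI.symm, fun u v h => (hbip.symm.mem_of_adj (hN h.1))⟩ ?_ ?_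
  · rintro z hz ⟨w, hzw⟩
    have hw := hbip.symm.mem_of_mem_adj hz (hN hzw.1)
    have hwz := hpendant w hw z hzw.1.symm
    obtain ⟨a, haw, hza⟩ := hI.exists_ne_adj_of_nonisolated hw hz hzw.2.symm hwz.1
    exact ⟨a, ⟨hza, .inr ⟨hz, fun ha => hI.isIndepSet hz ha hza.ne hza⟩⟩,
      fun h => haw (hwz.2 a h.symm)⟩
  · rintro u hu v hv - huv
    wlog hvI : v ∈ I generalizing u v
    · exact this hv hu huv.symm (huv.1.2.resolve_left fun h => hvI h.2).1
    obtain ⟨u', hu⟩ := hu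
    have huI : u ∉ I := fun h => hI.isIndepSet h hvI huv.1.1.ne huv.1.1
    have hu' := (hbip.mem_of_adj (hN hu.1)).resolve_right fun h => huI h.1
    have hvu' := (hpendant u hu'.1 u' hu.1).1 v ⟨huv.1.1, .inl ⟨hu'.1, hvI⟩⟩
    exact huv.2 (.inr (hvu' ▸ hu.1))

theorem IsRobustIndepSet.exists_satisfiable_between [Finite V] (hI : IsRobustIndepSet G I)
    (hM : M.IsBipartiteWith X Y) (hMG : M ≤ G) (hMI : Disjoint M.support I) :
    ∃ T, Satisfiable (G.between Iᶜ I) 7 T ∧ M ≤ T ∧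
      G.between (I ∪ M.support)ᶜ I ⊓ nonisolatedGraph G ≤ T := by
  have hMI' (v) (hv : v ∈ M.support) : v ∉ I := Set.disjoint_left.1 hMI hv
  have hWI : Disjoint (I ∪ M.support)ᶜ I :=
    Set.disjoint_left.2 fun v hv hvI => hv (.inl hvI)
  obtain ⟨E, N, hE, hN, hEN, hsat, hpendant⟩ :=
    exists_satisfiable_of_isBipartiteWith (between_isBipartiteWith (G := G) hWI)
  obtain ⟨K, hK, hKsat⟩ := hI.exists_inf_le_satisfiedGraph hWI hN hpendant
  obtain ⟨S, hS, hSsat⟩ : ∃ S ≤ G.between M.support I, M ≤ satisfiedGraph S := by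
    refine exists_le_satisfiedGraph_of_isBipartiteWith hM (fun x _ hx => ?_) fun x hx y hy _ h =>
      (h.2.elim (fun h => hMI' y hy h.2) fun h => hMI' x hx h.1)
    obtain ⟨z, hz, hxz⟩ := hI.exists_adj (hMI' x hx) (hMG hx.choose_spec)
    exact ⟨z, hxz, .inl ⟨hx, hz⟩⟩
  have hdisj : Disjoint (G.between (I ∪ M.support)ᶜ I) (G.between M.support I) := by
    rw [SimpleGraph.disjoint_left]
    grind [between_adj]
  have hdisj' : Disjoint (E ⊔ N) (S ⊔ K) :=
    .sup_right (hdisj.mono (sup_le hE hN) hS) (disjoint_sdiff_self_right.mono_right hK)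
  have hle : E ⊔ N ⊔ (S ⊔ K) ≤ G.between Iᶜ I := by
    refine sup_le (sup_le hE hN |>.trans ?_) (sup_le (hS.trans ?_) (hK.trans sdiff_le)) <;>
    · intro u v
      grind [between_adj]
  refine ⟨_, ((hsat.sup hEN (.of_satisfiedGraph N)).sup hdisj' (.satisfiedGraph_sup S K)).mono hle
    le_rfl, fun u v huv => .inr (.inl (hSsat huv)), fun u v ⟨huv, hne⟩ => ?_⟩
  by_cases hNuv : N.Adj u v
  · exact .inr (.inr (hKsat ⟨hNuv, hne⟩))
  · by_cases hNsat : (satisfiedGraph N).Adj u v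
    · exact .inl (.inr hNsat)
    · exact .inl (.inl ⟨huv, fun h => h.elim hNuv hNsat⟩)

end IsRobustIndepSet

theorem exists_conflictFree_of_colorable [Finite V] {G : SimpleGraph V} {k : ℕ}
    (hG : G.Colorable (2 ^ k)) : ∃ c, ConflictFree G c (3 * k + 9) := by
  obtain ⟨I, hI⟩ := exists_isRobustIndepSet G
  have hHG : G \ G.between Iᶜ I ≤ G := sdiff_le
  obtain ⟨c, hc, hck⟩ := exists_isGrundyColouring (hG.mono_left hHG)
  obtain ⟨F, M, hF, hM, hFM, hsat, hmatching, X, Y, hbip⟩ := hc.exists_satisfiable hck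
  have hMI : Disjoint M.support I := Set.disjoint_left.2 fun z ⟨w, hzw⟩ hz =>
    (hM hzw).2 ⟨(hM hzw).1, .inr ⟨hz, fun hw => hI.isIndepSet hz hw hzw.ne (hM hzw).1⟩⟩
  obtain ⟨T, hTsat, hMT, hT⟩ := hI.exists_satisfiable_between hbip (hM.trans hHG) hMI
  have hdisj : Disjoint (F ⊔ M) (G.between Iᶜ I) :=
    disjoint_sdiff_self_left.mono_left (sup_le hF hM)
  refine Satisfiable.exists_conflictFree (((hsat.sup hFM (.of_satisfiedGraph M)).sup hdisj
    hTsat).mono (sup_le ((sup_le hF hM).trans hHG) between_le) fun u v huv => ?_)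
  by_cases hMuv : (M ⊔ satisfiedGraph M).Adj u v
  · exact hMuv.elim (fun h => .inr (hMT h)) fun h => .inl (.inr h)
  by_cases hO : (G.between Iᶜ I).Adj u v
  · wlog hv : v ∈ I generalizing u v
    · exact (this v u huv.symm (mt SimpleGraph.Adj.symm hMuv) hO.symm
        (hO.2.resolve_left fun h => hv h.2).1).symm
    have huM : u ∉ M.support := fun ⟨x, hx⟩ => hMuv <| .inr <| .inl
      ⟨⟨x, hx, fun y hy => hmatching u y x hy hx⟩, fun hvM => Set.disjoint_left.1 hMI hvM hv⟩
    have huI : u ∉ I := fun hu => hI.isIndepSet hu hv huv.1.ne huv.1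
    exact .inr (hT ⟨⟨huv.1, .inl ⟨not_or.2 ⟨huI, huM⟩, hv⟩⟩, huv⟩)
  · exact .inl (.inl ⟨⟨huv.1, hO⟩, hMuv⟩)

theorem stmt9_general [Finite V] (G : SimpleGraph V) :
    ocfIndex G ≤ cfIndex G ∧ cfIndex G ≤ 3 * Nat.clog 2 G.chromaticNumber.toNat + 9 := by
  have hcol : G.Colorable (2 ^ Nat.clog 2 G.chromaticNumber.toNat) :=
    (colorable_chromaticNumber_of_fintype G).mono (Nat.le_pow_clog one_lt_two _)
  have hcf := exists_conflictFree_of_colorable hcol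
  obtain ⟨c, hc⟩ : ∃ c, ConflictFree G c (cfIndex G) :=
    Nat.sInf_mem (s := {k | ∃ c, ConflictFree G c k}) ⟨_, hcf⟩
  exact ⟨Nat.sInf_le ⟨c, hc.openCF⟩, Nat.sInf_le hcf⟩

end ConflictFree

theorem stmt9 {V : Type*} [Fintype V] (G : SimpleGraph V)
    (hnoisoedge : ∀ e ∈ G.edgeSet, (EON G e).Nonempty) :
    ocfIndex G ≤ cfIndex G ∧
    cfIndex G ≤ 3 * Nat.clog 2 G.chromaticNumber.toNat + 17 :=
  (stmt9_general G).imp_right fun h => h.trans (by omega)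
end

section
/- For every ε > 0 there exists Δ_ε such that every graph G with maximum degree Δ ≥ Δ_ε satisfies χ'_cf(G) ≤ (1+ε) log₂ Δ, where χ'_cf(G) is the minimum number of colours in a conflict-free edge colouring of G. -/
open SimpleGraph

/-!
Let `m` be a greedy proper edge colouring of `G`, so that every edge of colour at least `k` meets
edges of all the low colours `0, …, k - 1`. Let `T` consist of the edges whose ends each meet at
most `s` low-coloured edges; for `2 * s < k` they all have a low colour. Keep every low-coloured
edge outside `T` with probability `1 / 2`, together with its colour. A colour occurs on at most two
edges around `e`. Whatever the other coins show, at least one outcome of the coin of one of these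
edges makes the colour unique around `e`. An edge outside `T` sees at least `s` such colours, and
at least `k - s` of them if its own colour is not low. Its coins are shared with those of only
`O(k ^ 2)` low-coloured edges and `O(k * Δ)` edges in all, so by the asymmetric local lemma all
edges outside `T` can be satisfied if `64 * k ^ 2 ≤ 2 ^ s` and `64 * k * Δ ≤ 2 ^ (k - s)`. This
allows `k = (1 + o(1)) * log₂ Δ` and `s = O(log log Δ)`.

Edges of `T` meeting another edge of `T` are satisfied by a strong edge colouring of `T` with
`O(s ^ 2)` further colours. For an isolated edge `e` of `T`, fix an edge `φ e` meeting it. There is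
at most one other edge of the same colour around `e`; make it share the coin of `φ e` and be kept
exactly when `φ e` is discarded. Then either `φ e` is kept and its colour is unique around `e`, or
`φ e` is discarded and can receive one extra colour. One last colour goes to all remaining edges.
-/

section LocalLemma

open MeasureTheory

variable {Ω I : Type*} [MeasurableSpace Ω] {μ : Measure Ω} [IsFiniteMeasure μ]
  {E : Finset I} {B : I → Set Ω} {Γ : I → I → Prop} {p : I → ℝ}

theorem measureReal_iInter_compl_filter_le_two_mul {S : Finset I} {q : I → Prop}
    [DecidablePred q] (hsum : ∑ i ∈ S with q i, p i ≤ 1 / 4)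
    (hB : ∀ i ∈ S, q i → μ.real (B i ∩ ⋂ j ∈ S.filter (¬ q ·), (B j)ᶜ) ≤
      2 * p i * μ.real (⋂ j ∈ S.filter (¬ q ·), (B j)ᶜ)) :
    μ.real (⋂ j ∈ S.filter (¬ q ·), (B j)ᶜ) ≤ 2 * μ.real (⋂ j ∈ S, (B j)ᶜ) := by
  set far := S.filter (¬ q ·) with far_def
  have hcover : (⋂ j ∈ far, (B j)ᶜ) ⊆
      (⋂ j ∈ S, (B j)ᶜ) ∪ ⋃ i ∈ S.filter q, B i ∩ ⋂ j ∈ far, (B j)ᶜ := by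
    intro ω hω
    simp only [Set.mem_union, Set.mem_iUnion, Set.mem_inter_iff, Set.mem_iInter,
      Set.mem_compl_iff, far_def, Finset.mem_filter] at hω ⊢
    grind
  have hnear : ∑ i ∈ S with q i, μ.real (B i ∩ ⋂ j ∈ far, (B j)ᶜ) ≤
      1 / 2 * μ.real (⋂ j ∈ far, (B j)ᶜ) :=
    calc ∑ i ∈ S with q i, μ.real (B i ∩ ⋂ j ∈ far, (B j)ᶜ)
        ≤ ∑ i ∈ S with q i, 2 * p i * μ.real (⋂ j ∈ far, (B j)ᶜ) :=
          Finset.sum_le_sum fun i hi => hB i (Finset.mem_filter.1 hi).1 (Finset.mem_filter.1 hi).2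
      _ = 2 * (∑ i ∈ S with q i, p i) * μ.real (⋂ j ∈ far, (B j)ᶜ) := by
          rw [Finset.mul_sum, Finset.sum_mul]
      _ ≤ 2 * (1 / 4) * μ.real (⋂ j ∈ far, (B j)ᶜ) := by gcongr
      _ = 1 / 2 * μ.real (⋂ j ∈ far, (B j)ᶜ) := by ring
  have hle := (measureReal_mono hcover).trans (measureReal_union_le (μ := μ) _ _)
  have hunion := measureReal_biUnion_finset_le (μ := μ) (S.filter q) fun i =>
    B i ∩ ⋂ j ∈ far, (B j)ᶜ
  linarith

open scoped Classical in
theorem measureReal_inter_iInter_compl_le_two_mul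
    (hp : ∀ i ∈ E, 0 ≤ p i) (hsum : ∀ i ∈ E, ∑ j ∈ E with Γ i j, p j ≤ 1 / 4)
    (hB : ∀ i ∈ E, ∀ S ⊆ E, (∀ j ∈ S, ¬ Γ i j) →
      μ.real (B i ∩ ⋂ j ∈ S, (B j)ᶜ) ≤ p i * μ.real (⋂ j ∈ S, (B j)ᶜ))
    {S : Finset I} (hS : S ⊆ E) {i : I} (hi : i ∈ E) :
    μ.real (B i ∩ ⋂ j ∈ S, (B j)ᶜ) ≤ 2 * p i * μ.real (⋂ j ∈ S, (B j)ᶜ) := by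
  induction S using Finset.strongInduction generalizing i with
  | H S ih =>
  set far := S.filter (¬ Γ i ·)
  have hfar : far ⊆ S := Finset.filter_subset _ _
  have hmono : (⋂ j ∈ S, (B j)ᶜ) ⊆ ⋂ j ∈ far, (B j)ᶜ := Set.biInter_mono hfar fun _ _ => le_rfl
  have hsumS : ∑ j ∈ S with Γ i j, p j ≤ 1 / 4 :=
    (Finset.sum_le_sum_of_subset_of_nonneg (Finset.filter_subset_filter _ hS) fun j hj _ =>
      hp j (Finset.mem_of_mem_filter j hj)).trans (hsum i hi)
  have hhalf : μ.real (⋂ j ∈ far, (B j)ᶜ) ≤ 2 * μ.real (⋂ j ∈ S, (B j)ᶜ) :=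
    measureReal_iInter_compl_filter_le_two_mul hsumS fun j hj hij =>
      ih far (Finset.filter_ssubset.2 ⟨j, hj, not_not.2 hij⟩) (hfar.trans hS) (hS hj)
  calc μ.real (B i ∩ ⋂ j ∈ S, (B j)ᶜ)
      ≤ μ.real (B i ∩ ⋂ j ∈ far, (B j)ᶜ) := measureReal_mono (Set.inter_subset_inter_right _ hmono)
    _ ≤ p i * μ.real (⋂ j ∈ far, (B j)ᶜ) :=
        hB i hi far (hfar.trans hS) fun j hj => (Finset.mem_filter.1 hj).2
    _ ≤ p i * (2 * μ.real (⋂ j ∈ S, (B j)ᶜ)) := mul_le_mul_of_nonneg_left hhalf (hp i hi)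
    _ = 2 * p i * μ.real (⋂ j ∈ S, (B j)ᶜ) := by ring

open scoped Classical in
theorem measureReal_iInter_compl_pos_of_sum_le [NeZero μ]
    (hp : ∀ i ∈ E, p i < 1 / 2) (hsum : ∀ i ∈ E, ∑ j ∈ E with Γ i j, p j ≤ 1 / 4)
    (hB : ∀ i ∈ E, ∀ S ⊆ E, (∀ j ∈ S, ¬ Γ i j) →
      μ.real (B i ∩ ⋂ j ∈ S, (B j)ᶜ) ≤ p i * μ.real (⋂ j ∈ S, (B j)ᶜ)) :
    0 < μ.real (⋂ i ∈ E, (B i)ᶜ) := by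
  have huniv : 0 < μ.real Set.univ := measureReal_univ_pos
  have hp_nonneg : ∀ i ∈ E, 0 ≤ p i := fun i hi => by
    have h := hB i hi ∅ (Finset.empty_subset _) (by simp)
    simp only [Finset.notMem_empty, Set.iInter_of_empty, Set.iInter_univ, Set.inter_univ] at h
    exact nonneg_of_mul_nonneg_left (measureReal_nonneg.trans h) huniv
  suffices ∀ S ⊆ E, 0 < μ.real (⋂ i ∈ S, (B i)ᶜ) from this E subset_rfl
  intro S
  induction S using Finset.induction_on with
  | empty => simp
  | insert i S _ ih =>
    intro hS
    obtain ⟨hi, hSE⟩ := Finset.insert_subset_iff.1 hS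
    have hcond := measureReal_inter_iInter_compl_le_two_mul hp_nonneg hsum hB hSE hi
    have hcover : (⋂ j ∈ S, (B j)ᶜ) ⊆
        (⋂ j ∈ insert i S, (B j)ᶜ) ∪ (B i ∩ ⋂ j ∈ S, (B j)ᶜ) := by
      rw [Finset.set_biInter_insert]
      intro ω hω
      by_cases hωi : ω ∈ B i
      exacts [Or.inr ⟨hωi, hω⟩, Or.inl ⟨hωi, hω⟩]
    have hle := (measureReal_mono hcover).trans (measureReal_union_le (μ := μ) _ _)
    nlinarith [ih hSE, hp i hi]

end LocalLemma

section FiniteProduct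

open MeasureTheory

variable {ι : Type*} {κ : ι → Type*}

theorem ncard_inter_mul_card_of_dependsOn {X Y : Set (∀ i, κ i)} {C : Set ι}
    (hX : DependsOn (· ∈ X) C) (hY : DependsOn (· ∈ Y) Cᶜ) :
    (X ∩ Y).ncard * Nat.card (∀ i, κ i) = X.ncard * Y.ncard := by
  classical
  let swap : (∀ i, κ i) × (∀ i, κ i) → (∀ i, κ i) × (∀ i, κ i) :=
    fun q => (C.piecewise q.1 q.2, C.piecewise q.2 q.1)
  have hswap : swap.Involutive := by
    rintro ⟨a, b⟩
    ext i <;> by_cases hi : i ∈ C <;> simp [swap, hi]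
  have hpre : swap ⁻¹' (X ×ˢ Y) = (X ∩ Y) ×ˢ Set.univ := by
    ext ⟨a, b⟩
    have ha : (C.piecewise a b ∈ X) = (a ∈ X) := hX fun i hi => by simp [hi]
    have hb : (C.piecewise b a ∈ Y) = (a ∈ Y) := hY fun i hi => by simp_all
    simp [swap, ha, hb]
  rw [← Set.ncard_univ, ← Set.ncard_prod, ← Set.ncard_prod, ← hpre,
    Set.ncard_preimage_of_injective_subset_range hswap.injective
      (by simp [hswap.surjective.range_eq])]

theorem ncard_mul_card_pow_le_of_injOn_domRestrict {ι κ : Type*} [Finite ι] [Finite κ]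
    {B : Set (ι → κ)} {D : Set ι} (hB : Set.InjOn Dᶜ.domRestrict B) :
    B.ncard * Nat.card κ ^ D.ncard ≤ Nat.card (ι → κ) := by
  have hle : B.ncard ≤ Nat.card ((Dᶜ : Set ι) → κ) := by
    rw [← Set.ncard_univ]
    exact Set.ncard_le_ncard_of_injOn _ (fun _ _ => Set.mem_univ _) hB
  calc B.ncard * Nat.card κ ^ D.ncard
      ≤ Nat.card ((Dᶜ : Set ι) → κ) * Nat.card κ ^ D.ncard := Nat.mul_le_mul_right _ hle
    _ = Nat.card (ι → κ) := by
        rw [Nat.card_fun, Nat.card_fun, ← pow_add, Nat.card_coe_set_eq, add_comm,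
          Set.ncard_add_ncard_compl]

open scoped Classical in
theorem exists_forall_notMem_of_dependsOn [Finite ι] [∀ i, Finite (κ i)] [∀ i, Nonempty (κ i)]
    {I : Type*} {E : Finset I}
    {B : I → Set (∀ i, κ i)} {C : I → Set ι} {p : I → ℝ}
    (hdep : ∀ i ∈ E, DependsOn (· ∈ B i) (C i))
    (hcard : ∀ i ∈ E, (B i).ncard ≤ p i * Nat.card (∀ i, κ i))
    (hp : ∀ i ∈ E, p i < 1 / 2)
    (hsum : ∀ i ∈ E, ∑ j ∈ E with ¬ Disjoint (C i) (C j), p j ≤ 1 / 4) :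
    ∃ ω, ∀ i ∈ E, ω ∉ B i := by
  let _ : MeasurableSpace (∀ i, κ i) := ⊤
  have hcount (s : Set (∀ i, κ i)) : Measure.count.real s = s.ncard := by
    rw [Measure.real, Measure.count_apply MeasurableSpace.measurableSet_top,
      ← (Set.toFinite s).cast_ncard_eq, ENat.toENNReal_coe, ENNReal.toReal_natCast]
  have hpos : 0 < Measure.count.real (⋂ i ∈ E, (B i)ᶜ) := by
    refine measureReal_iInter_compl_pos_of_sum_le (Γ := fun i j => ¬ Disjoint (C i) (C j)) hp
      (fun i hi => by convert hsum i hi) fun i hi S hS hSi => ?_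
    have hindep := ncard_inter_mul_card_of_dependsOn (Y := ⋂ j ∈ S, (B j)ᶜ) (hdep i hi)
      fun ω ω' h => by
        simp only [Set.mem_iInter, Set.mem_compl_iff]
        refine propext (forall₂_congr fun j hj => not_congr (iff_of_eq ?_))
        exact hdep j (hS hj) fun x hx => h x
          (Set.disjoint_right.1 (not_not.1 (hSi j hj)) hx)
    have hΩ : (0 : ℝ) < Nat.card (∀ i, κ i) := mod_cast Nat.card_pos
    rw [hcount, hcount]
    refine le_of_mul_le_mul_right ?_ hΩ
    calc ((B i ∩ ⋂ j ∈ S, (B j)ᶜ).ncard : ℝ) * Nat.card (∀ i, κ i)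
        = (B i).ncard * (⋂ j ∈ S, (B j)ᶜ).ncard := mod_cast hindep
      _ ≤ p i * Nat.card (∀ i, κ i) * (⋂ j ∈ S, (B j)ᶜ).ncard := by gcongr; exact hcard i hi
      _ = p i * (⋂ j ∈ S, (B j)ᶜ).ncard * Nat.card (∀ i, κ i) := by ring
  obtain ⟨ω, hω⟩ := nonempty_of_measureReal_ne_zero hpos.ne'
  exact ⟨ω, by simpa using hω⟩

end FiniteProduct

theorem ncard_biUnion_le_ncard_mul {α β : Type*} {s : Set α} (hs : s.Finite) {t : α → Set β}
    {n : ℕ} (ht : ∀ a ∈ s, (t a).ncard ≤ n) : (⋃ a ∈ s, t a).ncard ≤ s.ncard * n := by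
  lift s to Finset α using hs
  rw [Set.ncard_coe_finset]
  exact (s.set_ncard_biUnion_le t).trans (Finset.sum_le_card_nsmul s _ n ht)

section GreedyColoring

variable {α : Type*} [Finite α] {G : SimpleGraph α}

-- Minimise the sum of all colours: a vertex missing a smaller colour around it could be recoloured.
theorem exists_coloring_forall_lt_exists_adj (G : SimpleGraph α) :
    ∃ c : G.Coloring ℕ, ∀ a, ∀ j < c a, ∃ b, G.Adj a b ∧ c b = j := by
  classical
  cases nonempty_fintype α
  obtain ⟨f, hf⟩ := Countable.exists_injective_nat α
  have : Nonempty (G.Coloring ℕ) := ⟨Coloring.mk f fun h => hf.ne h.ne⟩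
  let c := Function.argmin fun c : G.Coloring ℕ => ∑ a, c a
  refine ⟨c, fun a j hj => ?_⟩
  by_contra! hfree
  let c' : G.Coloring ℕ := Coloring.mk (Function.update c a j) fun {x y} hxy => by
    have := c.valid hxy
    grind [SimpleGraph.Adj.symm]
  have hlt : ∑ x, c' x < ∑ x, c x := by
    refine Finset.sum_lt_sum (fun x _ => ?_) ⟨a, Finset.mem_univ a, ?_⟩
    · obtain rfl | hx := eq_or_ne x a
      · exact (Function.update_self x j c).trans_le hj.le
      · exact (Function.update_of_ne hx j c).le
    · exact (Function.update_self a j c).trans_lt hj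
  exact hlt.not_ge (Function.argmin_le (fun c : G.Coloring ℕ => ∑ a, c a) c')

theorem apply_le_ncard_neighborSet {c : G.Coloring ℕ} {a : α}
    (hc : ∀ j < c a, ∃ b, G.Adj a b ∧ c b = j) : c a ≤ (G.neighborSet a).ncard := by
  have hsub : Set.Iio (c a) ⊆ c '' G.neighborSet a := hc
  calc c a = (Set.Iio (c a)).ncard := (Set.ncard_Iio_nat _).symm
    _ ≤ (c '' G.neighborSet a).ncard := Set.ncard_le_ncard hsub
    _ ≤ (G.neighborSet a).ncard := Set.ncard_image_le

end GreedyColoring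

section EdgeNeighborhoods

variable {V : Type*} {F G : SimpleGraph V} {e f g h : Sym2 V}

theorem mem_ECN_symm (he : e ∈ G.edgeSet) (hf : f ∈ ECN F e) : e ∈ ECN G f :=
  ⟨he, hf.2.imp fun _ hw => hw.symm⟩

theorem mem_EON_symm (he : e ∈ G.edgeSet) (hf : f ∈ EON G e) : e ∈ EON G f :=
  ⟨mem_ECN_symm he hf.1, fun h => hf.2 h.symm⟩

theorem ECN_mk (G : SimpleGraph V) (u v : V) :
    ECN G s(u, v) = G.incidenceSet u ∪ G.incidenceSet v := by
  ext f
  simp only [ECN, incidenceSet, Set.mem_union, Set.mem_ofPred_eq, Sym2.mem_iff]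
  grind

theorem ncard_ECN_le {d : ℕ} (hG : ∀ v ∈ e, (G.incidenceSet v).ncard ≤ d) :
    (ECN G e).ncard ≤ 2 * d := by
  induction e using Sym2.ind with
  | _ u v =>
    rw [ECN_mk, two_mul]
    exact (Set.ncard_union_le _ _).trans
      (add_le_add (hG u (Sym2.mem_mk_left u v)) (hG v (Sym2.mem_mk_right u v)))

/-- The line graph of `G`, extended to all unordered pairs so that non-edges of `G` are isolated:
its colourings are the proper edge colourings of `G`. -/
def edgeConflictGraph (G : SimpleGraph V) : SimpleGraph (Sym2 V) where
  Adj e f := e ∈ G.edgeSet ∧ f ∈ EON G e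
  symm := ⟨fun _ _ h => ⟨h.2.1.1, mem_EON_symm h.1 h.2⟩⟩
  loopless := ⟨fun _ h => h.2.2 rfl⟩

variable {m : (edgeConflictGraph G).Coloring ℕ}

theorem apply_ne_of_mem_EON (he : e ∈ G.edgeSet) (hf : f ∈ EON G e) : m f ≠ m e :=
  (m.valid ⟨he, hf⟩).symm

theorem injOn_incidenceSet (m : (edgeConflictGraph G).Coloring ℕ) (v : V) :
    Set.InjOn m (G.incidenceSet v) := by
  intro e he f hf hm
  by_contra hne
  exact apply_ne_of_mem_EON hf.1 ⟨⟨he.1, v, he.2, hf.2⟩, hne⟩ hm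

theorem ncard_incidenceSet_le_of_forall_lt [Finite V] (m : (edgeConflictGraph G).Coloring ℕ)
    {k : ℕ} (hFG : F ≤ G) (hF : ∀ e ∈ F.edgeSet, m e < k) (v : V) :
    (F.incidenceSet v).ncard ≤ k := by
  rw [← Set.ncard_Iio_nat k]
  exact Set.ncard_le_ncard_of_injOn m (fun e he => hF e he.1)
    ((injOn_incidenceSet m v).mono (Set.inter_subset_inter_left _ (edgeSet_mono hFG)))

-- A matching contains at most one edge at each of the two ends of `e`.
theorem eq_of_mem_EON_of_ne (hf : f ∈ EON G e) (hg : g ∈ EON G e) (hh : h ∈ EON G e)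
    (hmg : m g = m f) (hmh : m h = m f) (hgf : g ≠ f) (hhf : h ≠ f) : g = h := by
  induction e using Sym2.ind with
  | _ u v =>
    have hf' := hf.1
    have hg' := hg.1
    have hh' := hh.1
    rw [ECN_mk] at hf' hg' hh'
    have hu := injOn_incidenceSet m u
    have hv := injOn_incidenceSet m v
    grind [Set.InjOn]

end EdgeNeighborhoods

section PartialColourings

variable {V : Type*} {G : SimpleGraph V} {p q : Sym2 V → Option ℕ} {k l : ℕ} {e : Sym2 V}

theorem exists_conflictFree_of_satisfiedP (hp : PartialColouring G p k)
    (hsat : ∀ e ∈ G.edgeSet, (EON G e).Nonempty → SatisfiedP G p e) :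
    ∃ c, ConflictFree G c (k + 1) := by
  refine ⟨fun e => (p e).getD k, fun e _ => ?_, fun e he hne => ?_⟩
  · cases hpe : p e with
    | none => simp [hpe]
    | some α => simpa [hpe] using (hp e α hpe).2.trans k.lt_succ_self
  · obtain ⟨f, hf, α, hα, huniq⟩ := hsat e he hne
    refine ⟨f, hf, fun g hg hgf => huniq g hg ?_⟩
    have hαk := (hp f α hα).2
    simp only [hα, Option.getD_some] at hgf
    cases hpg : p g <;> grind

/-- The partial edge colouring which colours the edges in `K` by `c` and no others. -/
noncomputable def colourOn (c : Sym2 V → ℕ) (K : Set (Sym2 V)) (e : Sym2 V) : Option ℕ :=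
  open scoped Classical in if e ∈ K then some (c e) else none

variable {c : Sym2 V → ℕ} {K : Set (Sym2 V)}

theorem colourOn_eq_some_iff {α : ℕ} : colourOn c K e = some α ↔ e ∈ K ∧ c e = α := by
  simp [colourOn]

theorem colourOn_eq_none_or_of_disjoint {c' : Sym2 V → ℕ} {K' : Set (Sym2 V)}
    (h : Disjoint K K') (e : Sym2 V) : colourOn c K e = none ∨ colourOn c' K' e = none := by
  by_cases he : e ∈ K
  · exact .inr (if_neg (Set.disjoint_left.1 h he))
  · exact .inl (if_neg he)

theorem partialColouring_colourOn (hK : K ⊆ G.edgeSet) (hc : ∀ e ∈ K, c e < k) :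
    PartialColouring G (colourOn c K) k := fun e α hα => by
  obtain ⟨he, rfl⟩ := colourOn_eq_some_iff.1 hα
  exact ⟨hK he, hc e he⟩

theorem satisfiedP_colourOn_iff : SatisfiedP G (colourOn c K) e ↔
    ∃ f ∈ EON G e, f ∈ K ∧ ∀ g ∈ ECN G e, g ∈ K → c g = c f → g = f := by
  simp only [SatisfiedP, colourOn_eq_some_iff, and_imp]
  grind

/-- The partial colouring which follows `p` where it is defined and elsewhere follows `q`, whose
colours are shifted by `k` to keep them apart from the colours `0, …, k - 1` of `p`. -/
def mergeColouring (k : ℕ) (p q : Sym2 V → Option ℕ) (e : Sym2 V) : Option ℕ :=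
  (p e).or ((q e).map (k + ·))

theorem partialColouring_mergeColouring (hp : PartialColouring G p k)
    (hq : PartialColouring G q l) : PartialColouring G (mergeColouring k p q) (k + l) := by
  intro e α hα
  simp only [mergeColouring, Option.or_eq_some_iff, Option.map_eq_some_iff] at hα
  obtain hα | ⟨-, β, hβ, rfl⟩ := hα
  · exact ⟨(hp e α hα).1, (hp e α hα).2.trans_le (Nat.le_add_right k l)⟩
  · exact ⟨(hq e β hβ).1, Nat.add_lt_add_left (hq e β hβ).2 k⟩

theorem SatisfiedP.mergeColouring_left (h : SatisfiedP G p e) (hp : PartialColouring G p k) :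
    SatisfiedP G (mergeColouring k p q) e := by
  obtain ⟨f, hf, α, hα, huniq⟩ := h
  refine ⟨f, hf, α, by simp [mergeColouring, hα], fun g hg hgα => huniq g hg ?_⟩
  have := hp f α hα
  simp only [mergeColouring, Option.or_eq_some_iff, Option.map_eq_some_iff] at hgα
  grind

theorem SatisfiedP.mergeColouring_right (h : SatisfiedP G q e) (hp : PartialColouring G p k)
    (hpq : ∀ f, p f = none ∨ q f = none) : SatisfiedP G (mergeColouring k p q) e := by
  obtain ⟨f, hf, β, hβ, huniq⟩ := h
  have hpf : p f = none := (hpq f).resolve_right (by simp [hβ])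
  refine ⟨f, hf, k + β, by simp [mergeColouring, hpf, hβ], fun g hg hgβ => huniq g hg ?_⟩
  simp only [mergeColouring, Option.or_eq_some_iff, Option.map_eq_some_iff] at hgβ
  have := hp g
  grind

theorem exists_conflictFree_of_satisfiedP_or {p₁ p₂ p₃ : Sym2 V → Option ℕ} {k₁ k₂ k₃ : ℕ}
    (h₁ : PartialColouring G p₁ k₁) (h₂ : PartialColouring G p₂ k₂)
    (h₃ : PartialColouring G p₃ k₃) (h₁₂ : ∀ f, p₁ f = none ∨ p₂ f = none)
    (h₁₃ : ∀ f, p₁ f = none ∨ p₃ f = none) (h₂₃ : ∀ f, p₂ f = none ∨ p₃ f = none)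
    (hsat : ∀ e ∈ G.edgeSet, (EON G e).Nonempty →
      SatisfiedP G p₁ e ∨ SatisfiedP G p₂ e ∨ SatisfiedP G p₃ e) :
    ∃ c, ConflictFree G c (k₁ + (k₂ + k₃) + 1) := by
  have hdisj : ∀ f, p₁ f = none ∨ mergeColouring k₂ p₂ p₃ f = none := fun f =>
    or_iff_not_imp_left.2 fun hf => by
      simp [mergeColouring, (h₁₂ f).resolve_left hf, (h₁₃ f).resolve_left hf]
  refine exists_conflictFree_of_satisfiedP (partialColouring_mergeColouring h₁
    (partialColouring_mergeColouring h₂ h₃)) fun e he hne => ?_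
  obtain h | h | h := hsat e he hne
  · exact h.mergeColouring_left h₁
  · exact (h.mergeColouring_left h₂).mergeColouring_right h₁ hdisj
  · exact (h.mergeColouring_right h₂ h₂₃).mergeColouring_right h₁ hdisj

end PartialColourings

section CoinCouplings

theorem sum_one_half_pow_ite_le {α : Type*} {S : Finset α} {H : Set α} [DecidablePred (· ∈ H)]
    {s t : ℕ}
    (hs : 8 * (S.filter (· ∈ H)).card ≤ 2 ^ s) (ht : 8 * S.card ≤ 2 ^ t) :
    ∑ i ∈ S, (1 / 2 : ℝ) ^ (if i ∈ H then s else t) ≤ 1 / 4 := by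
  have hmul : ∀ n u : ℕ, 8 * n ≤ 2 ^ u → (n : ℝ) * (1 / 2) ^ u ≤ 1 / 8 := fun n u h => by
    have h' : (8 * n : ℝ) ≤ 2 ^ u := mod_cast h
    rw [one_div, inv_pow, ← div_eq_mul_inv, div_le_iff₀ (by positivity)]
    linarith
  have ht' : 8 * (S.filter (· ∉ H)).card ≤ 2 ^ t :=
    (Nat.mul_le_mul_left 8 (Finset.card_filter_le S _)).trans ht
  simp only [pow_ite, Finset.sum_ite, Finset.sum_const, nsmul_eq_mul]
  linarith [hmul _ s hs, hmul _ t ht']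

/-- A way to keep or discard elements at random by means of fair coins: `f` is kept if
`coin f` lands on `side f`. Distinct elements may share a coin only if they bet on opposite sides
and have the same colour under `m`. -/
structure CoinCoupling {α : Type*} (m : α → ℕ) where
  coin : α → α
  side : α → Bool
  eq_of_coin_eq_of_side_eq : ∀ f g, coin f = coin g → side f = side g → f = g
  colour_eq_of_coin_eq : ∀ f g, coin f = coin g → m f = m g

namespace CoinCoupling

section Kept

variable {α : Type*} {m : α → ℕ} (κ : CoinCoupling m) {ω ω' : α → Bool} {f g : α}

/-- The elements kept under the outcome `ω` of the coins. -/
def kept (ω : α → Bool) : Set α :=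
  {f | ω (κ.coin f) = κ.side f}

theorem mem_kept_congr (h : ω (κ.coin f) = ω' (κ.coin f)) : f ∈ κ.kept ω ↔ f ∈ κ.kept ω' := by
  simp only [kept, Set.mem_ofPred_eq, h]

theorem eq_of_coin_eq_of_mem_kept (hfg : κ.coin f = κ.coin g) (hf : f ∈ κ.kept ω)
    (hg : g ∈ κ.kept ω) : f = g := by
  simp only [kept, Set.mem_ofPred_eq, hfg] at hf hg
  exact κ.eq_of_coin_eq_of_side_eq f g hfg (hf.symm.trans hg)

theorem apply_coin_eq_of_mem_kept_iff (h : f ∈ κ.kept ω ↔ f ∈ κ.kept ω') :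
    ω (κ.coin f) = ω' (κ.coin f) := by
  have hbool : ∀ a b s : Bool, (a = s ↔ b = s) → a = b := by decide
  exact hbool _ _ _ h

theorem ncard_coin_eq_le (f : α) : {g | κ.coin g = κ.coin f}.ncard ≤ 2 :=
  calc {g | κ.coin g = κ.coin f}.ncard
      ≤ (Set.univ : Set Bool).ncard :=
        Set.ncard_le_ncard_of_injOn κ.side (fun _ _ => Set.mem_univ _) fun g hg h hh =>
          κ.eq_of_coin_eq_of_side_eq g h (hg.trans hh.symm)
    _ = 2 := by simp

open scoped Classical in
/-- The coupling in which each `f ∈ D` uses the coin of its partner `r f` and bets on the side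
opposite to that of the elements outside `D`. -/
noncomputable def ofPartner {D : Set α} (r : α → α) (hr : Set.InjOn r D)
    (hm : ∀ f ∈ D, m (r f) = m f) : CoinCoupling m where
  coin := D.piecewise r id
  side f := decide (f ∈ D)
  eq_of_coin_eq_of_side_eq f g hcoin hside := by
    by_cases hf : f ∈ D <;> by_cases hg : g ∈ D <;>
      simp_all [hr.eq_iff]
  colour_eq_of_coin_eq f g hcoin := by
    have hm' : ∀ f, m (D.piecewise r id f) = m f := fun f => by
      by_cases hf : f ∈ D <;> simp [hf, hm]
    rw [← hm' f, ← hm' g, hcoin]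

theorem mem_kept_ofPartner_iff {D : Set α} {r : α → α} (hr : Set.InjOn r D)
    (hm : ∀ f ∈ D, m (r f) = m f) (hf : f ∈ D) (hrf : r f ∉ D) :
    f ∈ (ofPartner r hr hm).kept ω ↔ r f ∉ (ofPartner r hr hm).kept ω := by
  simp [kept, ofPartner, hf, hrf]

end Kept

variable {V : Type*} {F G X : SimpleGraph V} {m : (edgeConflictGraph G).Coloring ℕ}
  (κ : CoinCoupling m) {ω ω' : Sym2 V → Bool} {e f : Sym2 V} {A : Set (Sym2 V)}

/-- The random partial colouring which colours the kept edges of `X` by `m`. -/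
noncomputable def keptColouring (X : SimpleGraph V) (ω : Sym2 V → Bool) : Sym2 V → Option ℕ :=
  colourOn m (X.edgeSet ∩ κ.kept ω)

theorem exists_ne_of_not_satisfiedP (he : e ∈ G.edgeSet)
    (hsat : ¬ SatisfiedP G (κ.keptColouring X ω) e) (hf : f ∈ EON G e) (hfX : f ∈ X.edgeSet)
    (hfω : f ∈ κ.kept ω) :
    ∃ g ∈ EON G e, g ∈ X.edgeSet ∧ g ∈ κ.kept ω ∧ m g = m f ∧ g ≠ f := by
  rw [keptColouring, satisfiedP_colourOn_iff] at hsat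
  push Not at hsat
  obtain ⟨g, hg, ⟨hgX, hgω⟩, hgf, hne⟩ := hsat f hf ⟨hfX, hfω⟩
  have hge : g ≠ e := by
    rintro rfl
    exact apply_ne_of_mem_EON he hf hgf.symm
  exact ⟨g, ⟨hg, hge⟩, hgX, hgω, hgf, hne⟩

/- If `f` is kept then the other edge `g` of its colour around `e` is also kept. Its coin is not
among those of `A`, so it remains kept under `ω'`; hence `f` must remain kept, as otherwise `g`
would satisfy `e`. -/
theorem mem_kept_of_not_satisfiedP (he : e ∈ G.edgeSet) (hAe : A ⊆ EON G e) (hAX : A ⊆ X.edgeSet)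
    (hAm : Set.InjOn m A) (hω : ¬ SatisfiedP G (κ.keptColouring X ω) e)
    (hω' : ¬ SatisfiedP G (κ.keptColouring X ω') e) (hωω' : Set.EqOn ω ω' (κ.coin '' A)ᶜ)
    (hf : f ∈ A) (hfω : f ∈ κ.kept ω) : f ∈ κ.kept ω' := by
  obtain ⟨g, hg, hgX, hgω, hgf, hne⟩ :=
    κ.exists_ne_of_not_satisfiedP he hω (hAe hf) (hAX hf) hfω
  have hgA : κ.coin g ∉ κ.coin '' A := by
    rintro ⟨f', hf', hcoin⟩
    obtain rfl : f' = f := hAm hf' hf ((κ.colour_eq_of_coin_eq f' g hcoin).trans hgf)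
    exact hne (κ.eq_of_coin_eq_of_mem_kept hcoin.symm hgω hfω)
  have hgω' : g ∈ κ.kept ω' := (κ.mem_kept_congr (hωω' hgA)).1 hgω
  by_contra hfω'
  obtain ⟨h, hh, -, hhω', hhg, hhne⟩ := κ.exists_ne_of_not_satisfiedP he hω' hg hgX hgω'
  have hhf : h ≠ f := fun hhf => hfω' (hhf ▸ hhω')
  exact hhne (eq_of_mem_EON_of_ne (hAe hf) hg hh hgf (hhg.trans hgf) hne hhf).symm

theorem ncard_not_satisfiedP_mul_two_pow_le [Finite V] (he : e ∈ G.edgeSet) (hAe : A ⊆ EON G e)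
    (hAX : A ⊆ X.edgeSet) (hAm : Set.InjOn m A) :
    {ω | ¬ SatisfiedP G (κ.keptColouring X ω) e}.ncard * 2 ^ A.ncard ≤
      Nat.card (Sym2 V → Bool) := by
  have hcoin : Set.InjOn κ.coin A := fun f hf g hg h => hAm hf hg (κ.colour_eq_of_coin_eq f g h)
  have hinj : Set.InjOn (κ.coin '' A)ᶜ.domRestrict
      {ω | ¬ SatisfiedP G (κ.keptColouring X ω) e} := by
    intro ω hω ω' hω' hrestrict
    have hωω' : Set.EqOn ω ω' (κ.coin '' A)ᶜ := Set.domRestrict_eq_domRestrict_iff.1 hrestrict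
    funext x
    by_cases hx : x ∈ κ.coin '' A
    · obtain ⟨f, hf, rfl⟩ := hx
      exact κ.apply_coin_eq_of_mem_kept_iff
        ⟨κ.mem_kept_of_not_satisfiedP he hAe hAX hAm hω hω' hωω' hf,
          κ.mem_kept_of_not_satisfiedP he hAe hAX hAm hω' hω hωω'.symm hf⟩
    · exact hωω' hx
  have hcard := ncard_mul_card_pow_le_of_injOn_domRestrict hinj
  rwa [Nat.card_eq_fintype_card (α := Bool), Fintype.card_bool, hcoin.ncard_image] at hcard

theorem dependsOn_not_satisfiedP (X : SimpleGraph V) (e : Sym2 V) :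
    DependsOn (· ∈ {ω | ¬ SatisfiedP G (κ.keptColouring X ω) e}) (κ.coin '' ECN X e) := by
  intro ω ω' h
  have hkept : ∀ g ∈ ECN G e, g ∈ X.edgeSet → (g ∈ κ.kept ω ↔ g ∈ κ.kept ω') := fun g hg hgX =>
    κ.mem_kept_congr (h _ ⟨g, ⟨hgX, hg.2⟩, rfl⟩)
  simp only [Set.mem_ofPred_eq, keptColouring, satisfiedP_colourOn_iff, Set.mem_inter_iff]
  grind [EON]

theorem ncard_not_disjoint_coin_le [Finite V] {a d : ℕ} (hX : ∀ v, (X.incidenceSet v).ncard ≤ a)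
    (hF : ∀ v, (F.incidenceSet v).ncard ≤ d) (e : Sym2 V) :
    {e' ∈ F.edgeSet | ¬ Disjoint (κ.coin '' ECN X e) (κ.coin '' ECN X e')}.ncard ≤
      8 * a * d := by
  have hsub : {e' ∈ F.edgeSet | ¬ Disjoint (κ.coin '' ECN X e) (κ.coin '' ECN X e')} ⊆
      ⋃ g ∈ ECN X e, ⋃ g' ∈ {g' | κ.coin g' = κ.coin g}, ECN F g' := by
    rintro e' ⟨he', hdisj⟩
    obtain ⟨_, ⟨g, hg, rfl⟩, g', hg', hcoin⟩ := Set.not_disjoint_iff.1 hdisj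
    exact Set.mem_biUnion hg (Set.mem_biUnion hcoin (mem_ECN_symm he' hg'))
  calc _ ≤ _ := Set.ncard_le_ncard hsub
    _ ≤ (ECN X e).ncard * (2 * (2 * d)) := by
        refine ncard_biUnion_le_ncard_mul (Set.toFinite _) fun g _ => ?_
        calc _ ≤ {g' | κ.coin g' = κ.coin g}.ncard * (2 * d) :=
              ncard_biUnion_le_ncard_mul (Set.toFinite _) fun g' _ => ncard_ECN_le fun v _ => hF v
          _ ≤ 2 * (2 * d) := Nat.mul_le_mul_right _ (κ.ncard_coin_eq_le g)
    _ ≤ 2 * a * (2 * (2 * d)) := Nat.mul_le_mul_right _ (ncard_ECN_le fun v _ => hX v)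
    _ = 8 * a * d := by ring

/- If `φ e` is the only edge of its colour around `e`, keeping it satisfies `e`; otherwise there is
exactly one further such edge, and it becomes the partner of `φ e`. -/
theorem exists_kept_iff_notMem_kept {N : Set (Sym2 V)} {φ : Sym2 V → Sym2 V}
    (hN : N.PairwiseDisjoint (EON G)) (hφ : ∀ e ∈ N, φ e ∈ EON G e) :
    ∃ κ : CoinCoupling m, ∀ e ∈ N, ∀ g ∈ EON G e, g ≠ φ e → m g = m (φ e) →
      ∀ ω, g ∈ κ.kept ω ↔ φ e ∉ κ.kept ω := by
  have hcentre : ∀ g, ∃ f, ∀ e ∈ N, g ∈ EON G e → f = φ e := fun g => by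
    by_cases hg : ∃ e ∈ N, g ∈ EON G e
    · obtain ⟨e, he, hge⟩ := hg
      exact ⟨φ e, fun e' he' hge' => congrArg φ (hN.elim_set he he' g hge hge')⟩
    · exact ⟨g, fun e he hge => absurd ⟨e, he, hge⟩ hg⟩
  choose r hr using hcentre
  let D : Set (Sym2 V) := {g | ∃ e ∈ N, g ∈ EON G e ∧ g ≠ φ e ∧ m g = m (φ e)}
  have hrm : ∀ g ∈ D, m (r g) = m g := by
    rintro g ⟨e, he, hg, -, hm⟩
    rw [hr g e he hg, hm]
  have hrinj : Set.InjOn r D := by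
    rintro g ⟨e, he, hg, hgφ, hmg⟩ g' ⟨e', he', hg', hgφ', hmg'⟩ hrr
    rw [hr g e he hg, hr g' e' he' hg'] at hrr
    obtain rfl := hN.elim_set he he' (φ e) (hφ e he) (hrr ▸ hφ e' he')
    exact eq_of_mem_EON_of_ne (hφ e he) hg hg' hmg hmg' hgφ hgφ'
  refine ⟨ofPartner r hrinj hrm, fun e he g hg hgφ hmg ω => ?_⟩
  have hφD : φ e ∉ D := by
    rintro ⟨e', he', hφe', hne, -⟩
    exact hne (congrArg φ (hN.elim_set he he' (φ e) (hφ e he) hφe'))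
  rw [← hr g e he hg] at hφD ⊢
  exact mem_kept_ofPartner_iff hrinj hrm ⟨e, he, hg, hgφ, hmg⟩ hφD

theorem exists_forall_satisfiedP_of_sum_le [Finite V] {E : Finset (Sym2 V)} {d : Sym2 V → ℕ}
    (hE : ∀ e ∈ E, e ∈ G.edgeSet) (hd : ∀ e ∈ E, 1 < d e)
    (hA : ∀ e ∈ E, ∃ A ⊆ EON G e, A ⊆ X.edgeSet ∧ Set.InjOn m A ∧ d e ≤ A.ncard)
    (hsum : ∀ e ∈ E, open scoped Classical in
      ∑ e' ∈ E with ¬ Disjoint (κ.coin '' ECN X e) (κ.coin '' ECN X e'), (1 / 2 : ℝ) ^ d e' ≤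
        1 / 4) :
    ∃ ω, ∀ e ∈ E, SatisfiedP G (κ.keptColouring X ω) e := by
  have hcard : ∀ e ∈ E, ({ω | ¬ SatisfiedP G (κ.keptColouring X ω) e}.ncard : ℝ) ≤
      (1 / 2 : ℝ) ^ d e * Nat.card (Sym2 V → Bool) := fun e he => by
    obtain ⟨A, hAe, hAX, hAm, hdA⟩ := hA e he
    have h := κ.ncard_not_satisfiedP_mul_two_pow_le (hE e he) hAe hAX hAm
    rw [one_div, inv_pow, inv_mul_eq_div, le_div_iff₀ (by positivity)]
    exact_mod_cast (Nat.mul_le_mul_left _ (Nat.pow_le_pow_right two_pos hdA)).trans h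
  have hhalf : ∀ e ∈ E, (1 / 2 : ℝ) ^ d e < 1 / 2 := fun e he =>
    pow_lt_self_of_lt_one₀ (by norm_num) (by norm_num) (hd e he)
  obtain ⟨ω, hω⟩ := exists_forall_notMem_of_dependsOn
    (fun e _ => κ.dependsOn_not_satisfiedP X e) hcard hhalf hsum
  exact ⟨ω, fun e he => not_not.1 (hω e he)⟩

theorem exists_forall_satisfiedP [Finite V] {H : SimpleGraph V} {E : Set (Sym2 V)}
    {k s t Δ : ℕ} (hX : ∀ v, (X.incidenceSet v).ncard ≤ k)
    (hH : ∀ v, (H.incidenceSet v).ncard ≤ k) (hG : ∀ v, (G.incidenceSet v).ncard ≤ Δ)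
    (hs : 64 * k ^ 2 ≤ 2 ^ s) (ht : 64 * k * Δ ≤ 2 ^ t) (hs_one : 1 < s) (ht_one : 1 < t)
    (hE : E ⊆ G.edgeSet)
    (hAH : ∀ e ∈ E, e ∈ H.edgeSet →
      ∃ A ⊆ EON G e, A ⊆ X.edgeSet ∧ Set.InjOn m A ∧ s ≤ A.ncard)
    (hAG : ∀ e ∈ E, e ∉ H.edgeSet →
      ∃ A ⊆ EON G e, A ⊆ X.edgeSet ∧ Set.InjOn m A ∧ t ≤ A.ncard) :
    ∃ ω, ∀ e ∈ E, SatisfiedP G (κ.keptColouring X ω) e := by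
  classical
  lift E to Finset (Sym2 V) using E.toFinite
  refine κ.exists_forall_satisfiedP_of_sum_le (d := fun e => if e ∈ H.edgeSet then s else t)
    (fun e he => hE he) (fun e _ => ?_) (fun e he => ?_) fun e _ => ?_
  · split_ifs <;> assumption
  · split_ifs with heH
    exacts [hAH e he heH, hAG e he heH]
  · apply sum_one_half_pow_ite_le
    · have hcard := κ.ncard_not_disjoint_coin_le hX hH e
      rw [← Set.ncard_coe_finset]
      refine le_trans (Nat.mul_le_mul_left 8 ((Set.ncard_le_ncard ?_).trans hcard)) (by linarith)
      intro e' he'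
      simp_all
    · have hcard := κ.ncard_not_disjoint_coin_le hX hG e
      rw [← Set.ncard_coe_finset]
      refine le_trans (Nat.mul_le_mul_left 8 ((Set.ncard_le_ncard ?_).trans hcard)) (by linarith)
      intro e' he'
      exact ⟨hE (Finset.mem_of_mem_filter e' he'), (Finset.mem_filter.1 he').2⟩

theorem satisfiedP_keptColouring_of_forall_notMem_kept (he : e ∉ X.edgeSet) (hf : f ∈ EON G e)
    (hfX : f ∈ X.edgeSet) (hfω : f ∈ κ.kept ω)
    (hrival : ∀ g ∈ EON G e, g ≠ f → m g = m f → g ∉ κ.kept ω) :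
    SatisfiedP G (κ.keptColouring X ω) e := by
  refine satisfiedP_colourOn_iff.2 ⟨f, hf, ⟨hfX, hfω⟩, fun g hg hgK hmg => ?_⟩
  by_contra hgf
  exact hrival g ⟨hg, fun hge => he (hge ▸ hgK.1)⟩ hgf hmg hgK.2

end CoinCoupling

end CoinCouplings

section StrongEdgeColouring

variable {V : Type*} {G T : SimpleGraph V} {e f : Sym2 V}

/-- The graph in which two edges of `T` are adjacent if some edge of `T` meets both: its colourings
are the strong edge colourings of `T`. -/
def strongConflictGraph (T : SimpleGraph V) : SimpleGraph (Sym2 V) where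
  Adj e f := e ≠ f ∧ ∃ g ∈ T.edgeSet, e ∈ ECN T g ∧ f ∈ ECN T g
  symm := ⟨fun _ _ ⟨hne, g, hg, he, hf⟩ => ⟨hne.symm, g, hg, hf, he⟩⟩
  loopless := ⟨fun _ h => h.1 rfl⟩

theorem exists_forall_injOn_ECN [Finite V] {d : ℕ} (hT : ∀ v, (T.incidenceSet v).ncard ≤ d) :
    ∃ c : Sym2 V → ℕ, (∀ e, c e < 4 * d ^ 2 + 1) ∧ ∀ e ∈ T.edgeSet, Set.InjOn c (ECN T e) := by
  obtain ⟨c, hc⟩ := exists_coloring_forall_lt_exists_adj (strongConflictGraph T)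
  refine ⟨c, fun e => ?_, fun e he f hf g hg hfg => ?_⟩
  · have hsub : (strongConflictGraph T).neighborSet e ⊆ ⋃ g ∈ ECN T e, ECN T g :=
      fun f ⟨_, g, hg, heg, hfg⟩ => Set.mem_biUnion (mem_ECN_symm hg heg) hfg
    rw [Nat.lt_succ_iff]
    calc c e ≤ ((strongConflictGraph T).neighborSet e).ncard := apply_le_ncard_neighborSet (hc e)
      _ ≤ (⋃ g ∈ ECN T e, ECN T g).ncard := Set.ncard_le_ncard hsub
      _ ≤ (ECN T e).ncard * (2 * d) :=
          ncard_biUnion_le_ncard_mul (Set.toFinite _) fun g _ => ncard_ECN_le fun v _ => hT v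
      _ ≤ 2 * d * (2 * d) := Nat.mul_le_mul_right _ (ncard_ECN_le fun v _ => hT v)
      _ = 4 * d ^ 2 := by ring
  · by_contra hne
    exact c.valid ⟨hne, e, he, hf, hg⟩ hfg

theorem satisfiedP_colourOn_edgeSet {c : Sym2 V → ℕ} (hc : Set.InjOn c (ECN T e))
    (hf : f ∈ EON G e) (hfT : f ∈ T.edgeSet) : SatisfiedP G (colourOn c T.edgeSet) e :=
  satisfiedP_colourOn_iff.2 ⟨f, hf, hfT, fun _ hg hgT hgf =>
    hc ⟨hgT, hg.2⟩ ⟨hfT, hf.1.2⟩ hgf⟩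

end StrongEdgeColouring

section InnerGraph

variable {V : Type*} {G : SimpleGraph V} {W : Set V} {e : Sym2 V}

/-- The spanning subgraph of `G` formed by the edges with both ends in `W`. -/
def innerGraph (G : SimpleGraph V) (W : Set V) : SimpleGraph V :=
  G.deleteEdges {e | ∃ v ∈ e, v ∉ W}

theorem mem_edgeSet_innerGraph :
    e ∈ (innerGraph G W).edgeSet ↔ e ∈ G.edgeSet ∧ ∀ v ∈ e, v ∈ W := by
  simp [innerGraph, edgeSet_deleteEdges]

theorem innerGraph_le (G : SimpleGraph V) (W : Set V) : innerGraph G W ≤ G :=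
  deleteEdges_le _

/-- The isolated edges of `innerGraph G W` which are not isolated in `G`. -/
def isolatedInnerEdges (G : SimpleGraph V) (W : Set V) : Set (Sym2 V) :=
  {e ∈ (innerGraph G W).edgeSet |
    (EON G e).Nonempty ∧ Disjoint (EON G e) (innerGraph G W).edgeSet}

-- An edge meeting two disjoint edges with ends in `W` has both its ends in `W`.
theorem pairwiseDisjoint_EON_isolatedInnerEdges (G : SimpleGraph V) (W : Set V) :
    (isolatedInnerEdges G W).PairwiseDisjoint (EON G) := by
  rintro e ⟨he, -, heW⟩ f ⟨hf, -, -⟩ hef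
  refine Set.disjoint_left.2 fun g hge hgf => ?_
  have hgW := Set.disjoint_left.1 heW hge
  obtain ⟨⟨hgG, x, hxg, hxe⟩, -⟩ := hge
  obtain ⟨⟨-, y, hyg, hyf⟩, -⟩ := hgf
  rw [mem_edgeSet_innerGraph] at he hf
  obtain rfl | hxy := eq_or_ne x y
  · exact Set.disjoint_left.1 heW ⟨⟨hf.1, x, hyf, hxe⟩, hef.symm⟩ (mem_edgeSet_innerGraph.2 hf)
  · obtain rfl := (Sym2.mem_and_mem_iff hxy).1 ⟨hxg, hyg⟩
    refine hgW (mem_edgeSet_innerGraph.2 ⟨hgG, ?_⟩)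
    rintro v hv
    obtain rfl | rfl := Sym2.mem_iff.1 hv
    exacts [he.2 v hxe, hf.2 v hyf]

theorem disjoint_image_isolatedInnerEdges {φ : Sym2 V → Sym2 V}
    (hφ : ∀ e ∈ isolatedInnerEdges G W, φ e ∈ EON G e) :
    Disjoint (φ '' isolatedInnerEdges G W) (innerGraph G W).edgeSet := by
  rw [Set.disjoint_left]
  rintro _ ⟨e, he, rfl⟩
  exact Set.disjoint_left.1 he.2.2 (hφ e he)

theorem satisfiedP_colourOn_subset_image {N K : Set (Sym2 V)} {φ : Sym2 V → Sym2 V}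
    (c : Sym2 V → ℕ) (hN : N.PairwiseDisjoint (EON G)) (hφ : ∀ e ∈ N, φ e ∈ EON G e)
    (hK : K ⊆ φ '' N) (he : e ∈ N) (heK : e ∉ K) (hφK : φ e ∈ K) :
    SatisfiedP G (colourOn c K) e := by
  refine satisfiedP_colourOn_iff.2 ⟨φ e, hφ e he, hφK, fun g hg hgK _ => ?_⟩
  have hge : g ∈ EON G e := ⟨hg, fun hge => heK (hge ▸ hgK)⟩
  obtain ⟨e', he', rfl⟩ := hK hgK
  exact congrArg φ (hN.elim_set he' he (φ e') (hφ e' he') hge)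

end InnerGraph

section LowColours

variable {V : Type*} {G : SimpleGraph V} {m : (edgeConflictGraph G).Coloring ℕ} {k s : ℕ}
  {e : Sym2 V}

/-- The subgraph formed by the edges with a colour less than `k`. -/
def lowColourGraph (m : (edgeConflictGraph G).Coloring ℕ) (k : ℕ) : SimpleGraph V :=
  G.deleteEdges {e | k ≤ m e}

theorem mem_edgeSet_lowColourGraph :
    e ∈ (lowColourGraph m k).edgeSet ↔ e ∈ G.edgeSet ∧ m e < k := by
  simp [lowColourGraph, edgeSet_deleteEdges]

theorem lowColourGraph_le (m : (edgeConflictGraph G).Coloring ℕ) (k : ℕ) :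
    lowColourGraph m k ≤ G :=
  deleteEdges_le _

theorem surjOn_EON_inter_lowColourGraph
    (hm : ∀ e, ∀ j < m e, ∃ f, (edgeConflictGraph G).Adj e f ∧ m f = j) (he : k ≤ m e) :
    Set.SurjOn m (EON G e ∩ (lowColourGraph m k).edgeSet) (Set.Iio k) := by
  intro j hj
  obtain ⟨f, ⟨-, hf⟩, rfl⟩ := hm e j (lt_of_lt_of_le hj he)
  exact ⟨f, ⟨hf, mem_edgeSet_lowColourGraph.2 ⟨hf.1.1, hj⟩⟩, rfl⟩

/-- The vertices incident with at most `s` edges of `H`. -/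
def lightVertices (H : SimpleGraph V) (s : ℕ) : Set V :=
  {v | (H.incidenceSet v).ncard ≤ s}

/-- The subgraph formed by the edges whose ends are incident with at most `s` edges of colour less
than `k`. -/
abbrev lightGraph (m : (edgeConflictGraph G).Coloring ℕ) (k s : ℕ) : SimpleGraph V :=
  innerGraph G (lightVertices (lowColourGraph m k) s)

theorem exists_injOn_of_mem_lowColourGraph (he : e ∈ (lowColourGraph m k).edgeSet)
    (heT : e ∉ (lightGraph m k s).edgeSet) :
    ∃ A ⊆ EON G e, A ⊆ (lowColourGraph m k \ lightGraph m k s).edgeSet ∧ Set.InjOn m A ∧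
      s ≤ A.ncard := by
  set H := lowColourGraph m k
  have heG := (mem_edgeSet_lowColourGraph.1 he).1
  obtain ⟨v, hve, hvW⟩ : ∃ v ∈ e, v ∉ lightVertices H s := by
    by_contra! h
    exact heT (mem_edgeSet_innerGraph.2 ⟨heG, h⟩)
  have hHG : H.incidenceSet v ⊆ G.incidenceSet v :=
    Set.inter_subset_inter_left _ (edgeSet_mono (lowColourGraph_le m k))
  refine ⟨H.incidenceSet v \ {e}, ?_, ?_, ?_, ?_⟩
  · exact fun f ⟨hf, hfe⟩ => ⟨⟨(hHG hf).1, v, hf.2, hve⟩, hfe⟩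
  · rw [edgeSet_sdiff]
    exact fun f ⟨hf, _⟩ => ⟨hf.1, fun hfT => hvW ((mem_edgeSet_innerGraph.1 hfT).2 v hf.2)⟩
  · exact (injOn_incidenceSet m v).mono (Set.sdiff_subset.trans hHG)
  · have hv : s < (H.incidenceSet v).ncard := not_le.1 hvW
    have := Set.pred_ncard_le_ncard_sdiff_singleton (H.incidenceSet v) e
    omega

variable [Finite V]

-- An edge of colour at least `k` meets all `k` low colours, but light ends provide at most `2 * s`.
theorem lightGraph_le_lowColourGraph
    (hm : ∀ e, ∀ j < m e, ∃ f, (edgeConflictGraph G).Adj e f ∧ m f = j) (hsk : 2 * s < k) :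
    lightGraph m k s ≤ lowColourGraph m k := by
  rw [← edgeSet_subset_edgeSet]
  intro e he
  obtain ⟨heG, heW⟩ := mem_edgeSet_innerGraph.1 he
  refine mem_edgeSet_lowColourGraph.2 ⟨heG, ?_⟩
  by_contra! hke
  have hsub : Set.Iio k ⊆ m '' ECN (lowColourGraph m k) e :=
    (surjOn_EON_inter_lowColourGraph hm hke).trans
      (Set.image_mono fun f hf => ⟨hf.2, hf.1.1.2⟩)
  have hk : k ≤ 2 * s :=
    calc k = (Set.Iio k).ncard := (Set.ncard_Iio_nat k).symm
      _ ≤ (m '' ECN (lowColourGraph m k) e).ncard := Set.ncard_le_ncard hsub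
      _ ≤ (ECN (lowColourGraph m k) e).ncard := Set.ncard_image_le
      _ ≤ 2 * s := ncard_ECN_le heW
  exact hk.not_gt hsk

theorem ncard_incidenceSet_lightGraph_le
    (hle : lightGraph m k s ≤ lowColourGraph m k) (v : V) :
    ((lightGraph m k s).incidenceSet v).ncard ≤ s := by
  by_cases hv : v ∈ lightVertices (lowColourGraph m k) s
  · exact (Set.ncard_le_ncard (Set.inter_subset_inter_left _ (edgeSet_mono hle))).trans hv
  · have hempty : (lightGraph m k s).incidenceSet v = ∅ := Set.eq_empty_of_forall_notMem
      fun e he => hv ((mem_edgeSet_innerGraph.1 he.1).2 v he.2)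
    simp [hempty]

theorem exists_injOn_of_notMem_lowColourGraph
    (hm : ∀ e, ∀ j < m e, ∃ f, (edgeConflictGraph G).Adj e f ∧ m f = j)
    (hle : lightGraph m k s ≤ lowColourGraph m k) (heG : e ∈ G.edgeSet)
    (he : e ∉ (lowColourGraph m k).edgeSet) :
    ∃ A ⊆ EON G e, A ⊆ (lowColourGraph m k \ lightGraph m k s).edgeSet ∧ Set.InjOn m A ∧
      k - s ≤ A.ncard := by
  have hke : k ≤ m e := not_lt.1 fun h => he (mem_edgeSet_lowColourGraph.2 ⟨heG, h⟩)
  obtain ⟨A, hA, hbij⟩ := (surjOn_EON_inter_lowColourGraph hm hke).exists_bijOn_subset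
  have hAk : A.ncard = k := by
    rw [← hbij.injOn.ncard_image, hbij.image_eq, Set.ncard_Iio_nat]
  obtain ⟨v, hve, hvW⟩ : ∃ v ∈ e, v ∉ lightVertices (lowColourGraph m k) s := by
    by_contra! h
    exact he (edgeSet_mono hle (mem_edgeSet_innerGraph.2 ⟨heG, h⟩))
  obtain ⟨u, rfl⟩ := hve
  have hAT : A ∩ (lightGraph m k s).edgeSet ⊆ (lightGraph m k s).incidenceSet u := by
    rintro f ⟨hfA, hfT⟩
    obtain ⟨w, hwf, hwe⟩ := (hA hfA).1.1.2
    obtain rfl | rfl := Sym2.mem_iff.1 hwe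
    exacts [absurd ((mem_edgeSet_innerGraph.1 hfT).2 w hwf) hvW, ⟨hfT, hwf⟩]
  refine ⟨A \ (lightGraph m k s).edgeSet, fun f hf => (hA hf.1).1, ?_,
    hbij.injOn.mono Set.sdiff_subset, ?_⟩
  · rw [edgeSet_sdiff]
    exact Set.sdiff_subset_sdiff_left fun f hf => (hA hf).2
  · have h1 := (Set.ncard_le_ncard hAT).trans (ncard_incidenceSet_lightGraph_le hle u)
    have h2 := Set.ncard_inter_add_ncard_sdiff_eq_ncard A (lightGraph m k s).edgeSet
    omega

end LowColours

section Combination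

variable {V : Type*} {G X : SimpleGraph V} {m : (edgeConflictGraph G).Coloring ℕ} {k s : ℕ}
  {e : Sym2 V}

theorem satisfiedP_keptColouring_or_satisfiedP_colourOn {N : Set (Sym2 V)}
    {φ : Sym2 V → Sym2 V} {κ : CoinCoupling m} {ω : Sym2 V → Bool} (c : Sym2 V → ℕ)
    (hN : N.PairwiseDisjoint (EON G)) (hφ : ∀ e ∈ N, φ e ∈ EON G e)
    (hκ : ∀ g ∈ EON G e, g ≠ φ e → m g = m (φ e) → (g ∈ κ.kept ω ↔ φ e ∉ κ.kept ω))
    (he : e ∈ N) (heX : e ∉ X.edgeSet) (heφ : e ∉ φ '' N) :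
    SatisfiedP G (κ.keptColouring X ω) e ∨
      SatisfiedP G (colourOn c (φ '' N \ (X.edgeSet ∩ κ.kept ω))) e := by
  by_cases hφK : φ e ∈ X.edgeSet ∩ κ.kept ω
  · exact .inl <| κ.satisfiedP_keptColouring_of_forall_notMem_kept heX (hφ e he) hφK.1 hφK.2
      fun g hg hne hmg hgω => (hκ g hg hne hmg).1 hgω hφK.2
  · exact .inr <| satisfiedP_colourOn_subset_image c hN hφ Set.sdiff_subset he
      (fun h => heφ h.1) ⟨⟨e, he, rfl⟩, hφK⟩

theorem satisfiedP_or_of_mem_innerGraph {W : Set V} {φ : Sym2 V → Sym2 V} {κ : CoinCoupling m}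
    {ω : Sym2 V → Bool} {c : Sym2 V → ℕ} (c' : Sym2 V → ℕ)
    (hφ : ∀ e ∈ isolatedInnerEdges G W, φ e ∈ EON G e)
    (hκ : ∀ e ∈ isolatedInnerEdges G W, ∀ g ∈ EON G e, g ≠ φ e → m g = m (φ e) →
      (g ∈ κ.kept ω ↔ φ e ∉ κ.kept ω))
    (hXW : Disjoint X.edgeSet (innerGraph G W).edgeSet)
    (hc : Set.InjOn c (ECN (innerGraph G W) e)) (he : e ∈ (innerGraph G W).edgeSet)
    (hne : (EON G e).Nonempty) :
    SatisfiedP G (κ.keptColouring X ω) e ∨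
      SatisfiedP G (colourOn c (innerGraph G W).edgeSet) e ∨
      SatisfiedP G (colourOn c' (φ '' isolatedInnerEdges G W \ (X.edgeSet ∩ κ.kept ω))) e := by
  by_cases hdisj : Disjoint (EON G e) (innerGraph G W).edgeSet
  · have heN : e ∈ isolatedInnerEdges G W := ⟨he, hne, hdisj⟩
    exact (satisfiedP_keptColouring_or_satisfiedP_colourOn c'
      (pairwiseDisjoint_EON_isolatedInnerEdges G W) hφ (hκ e heN) heN
      (Set.disjoint_right.1 hXW he)
      (Set.disjoint_right.1 (disjoint_image_isolatedInnerEdges hφ) he)).imp_right .inr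
  · obtain ⟨f, hf, hfW⟩ := Set.not_disjoint_iff.1 hdisj
    exact .inr (.inl (satisfiedP_colourOn_edgeSet hc hf hfW))

theorem exists_forall_satisfiedP_of_notMem_lightGraph [Finite V] {Δ : ℕ}
    (hG : ∀ v, (G.incidenceSet v).ncard ≤ Δ) (hks : 64 * k ^ 2 ≤ 2 ^ s)
    (hΔ : 64 * k * Δ ≤ 2 ^ (k - s)) (hsk : 2 * s < k)
    (hm : ∀ e, ∀ j < m e, ∃ f, (edgeConflictGraph G).Adj e f ∧ m f = j)
    (κ : CoinCoupling m) :
    ∃ ω, ∀ e ∈ G.edgeSet, e ∉ (lightGraph m k s).edgeSet →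
      SatisfiedP G (κ.keptColouring (lowColourGraph m k \ lightGraph m k s) ω) e := by
  have hle := lightGraph_le_lowColourGraph hm hsk
  have hH : ∀ v, ((lowColourGraph m k).incidenceSet v).ncard ≤ k :=
    ncard_incidenceSet_le_of_forall_lt m (lowColourGraph_le m k) fun e he =>
      (mem_edgeSet_lowColourGraph.1 he).2
  have hX : ∀ v, ((lowColourGraph m k \ lightGraph m k s).incidenceSet v).ncard ≤ k := fun v =>
    (Set.ncard_le_ncard (Set.inter_subset_inter_left _ (edgeSet_mono sdiff_le))).trans (hH v)
  have hs_one : 1 < s := by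
    by_contra! hs
    have := Nat.pow_le_pow_right two_pos hs
    nlinarith [Nat.pos_of_ne_zero (by omega : k ≠ 0)]
  obtain ⟨ω, hω⟩ := κ.exists_forall_satisfiedP hX hH hG hks hΔ hs_one (by omega)
    (E := G.edgeSet \ (lightGraph m k s).edgeSet) Set.sdiff_subset
    (fun e he heH => exists_injOn_of_mem_lowColourGraph heH he.2)
    (fun e he heH => exists_injOn_of_notMem_lowColourGraph hm hle he.1 heH)
  exact ⟨ω, fun e he heT => hω e ⟨he, heT⟩⟩

theorem exists_conflictFree_of_two_pow [Finite V] (G : SimpleGraph V) {k s Δ : ℕ}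
    (hG : ∀ v, (G.incidenceSet v).ncard ≤ Δ) (hks : 64 * k ^ 2 ≤ 2 ^ s)
    (hΔ : 64 * k * Δ ≤ 2 ^ (k - s)) (hsk : 2 * s < k) :
    ∃ c, ConflictFree G c (k + 4 * s ^ 2 + 3) := by
  obtain ⟨m, hm⟩ := exists_coloring_forall_lt_exists_adj (edgeConflictGraph G)
  set W := lightVertices (lowColourGraph m k) s
  set T := innerGraph G W
  set X := lowColourGraph m k \ T
  set N := isolatedInnerEdges G W
  choose! φ hφ using fun e (he : e ∈ N) => he.2.1
  obtain ⟨κ, hκ⟩ := CoinCoupling.exists_kept_iff_notMem_kept (m := m)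
    (pairwiseDisjoint_EON_isolatedInnerEdges G W) hφ
  obtain ⟨ω, hω⟩ := exists_forall_satisfiedP_of_notMem_lightGraph hG hks hΔ hsk hm κ
  obtain ⟨c, hc, hcT⟩ := exists_forall_injOn_ECN
    (ncard_incidenceSet_lightGraph_le (lightGraph_le_lowColourGraph hm hsk))
  have hXT : Disjoint X.edgeSet T.edgeSet := disjoint_edgeSet.2 disjoint_sdiff_self_left
  have hX : ∀ e ∈ X.edgeSet, e ∈ G.edgeSet ∧ m e < k := fun e he =>
    mem_edgeSet_lowColourGraph.1 (edgeSet_mono sdiff_le he)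
  have hpX : PartialColouring G (κ.keptColouring X ω) k :=
    partialColouring_colourOn (fun e he => (hX e he.1).1) fun e he => (hX e he.1).2
  have hpT : PartialColouring G (colourOn c T.edgeSet) (4 * s ^ 2 + 1) :=
    partialColouring_colourOn (edgeSet_mono (innerGraph_le G W)) fun e _ => hc e
  have hpφ : PartialColouring G (colourOn 0 (φ '' N \ (X.edgeSet ∩ κ.kept ω))) 1 :=
    partialColouring_colourOn (fun _ ⟨⟨e, he, hφe⟩, _⟩ => hφe ▸ (hφ e he).1.1)
      fun _ _ => one_pos
  refine exists_conflictFree_of_satisfiedP_or hpX hpT hpφ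
    (colourOn_eq_none_or_of_disjoint (hXT.mono_left Set.inter_subset_left))
    (colourOn_eq_none_or_of_disjoint Set.disjoint_sdiff_right)
    (colourOn_eq_none_or_of_disjoint
      ((disjoint_image_isolatedInnerEdges hφ).symm.mono_right Set.sdiff_subset))
    fun e he hne => ?_
  by_cases heT : e ∈ T.edgeSet
  · exact satisfiedP_or_of_mem_innerGraph 0 hφ (fun e he g hg hne hmg => hκ e he g hg hne hmg ω)
      hXT (hcT e heT) heT hne
  · exact .inl (hω e he heT)

end Combination

section Asymptotics

open Filter Asymptotics

theorem tendsto_logb_natCast_atTop {b : ℕ} (hb : 1 < b) :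
    Tendsto (fun n : ℕ => Real.logb b n) atTop atTop :=
  (Real.tendsto_logb_atTop (mod_cast hb)).comp tendsto_natCast_atTop_atTop

theorem tendsto_clog_atTop {b : ℕ} (hb : 1 < b) : Tendsto (Nat.clog b) atTop atTop := by
  simpa only [Function.comp_def, Real.natCeil_logb_natCast] using
    tendsto_nat_ceil_atTop.comp (tendsto_logb_natCast_atTop hb)

theorem isLittleO_clog_pow {b : ℕ} (hb : 1 < b) (r : ℕ) :
    (fun n : ℕ => (Nat.clog b n : ℝ) ^ r) =o[atTop] fun n : ℕ => (n : ℝ) := by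
  have hclog : (fun n : ℕ => (Nat.clog b n : ℝ)) =O[atTop] fun n : ℕ => Real.log n :=
    calc (fun n : ℕ => (Nat.clog b n : ℝ))
        =O[atTop] fun n : ℕ => Real.logb b n := by
          simpa only [Function.comp_def, Real.natCeil_logb_natCast, id] using
            (isEquivalent_nat_ceil.comp_tendsto
              (tendsto_logb_natCast_atTop hb)).isBigO
      _ =O[atTop] fun n : ℕ => Real.log n := by
          simpa only [Real.logb, div_eq_inv_mul] using
            isBigO_const_mul_self _ (fun n : ℕ => Real.log n) atTop
  exact (hclog.pow r).trans_isLittleO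
    (Real.isLittleO_pow_log_id_atTop.comp_tendsto tendsto_natCast_atTop_atTop)

theorem eventually_mul_sq_le_two_pow_clog :
    ∀ᶠ n : ℕ in atTop, 64 * (n + 8 * Nat.clog 2 n) ^ 2 ≤ 2 ^ (4 * Nat.clog 2 n) := by
  have hclog := (isLittleO_clog_pow one_lt_two 1).bound (show (0 : ℝ) < 1 / 8 by norm_num)
  filter_upwards [hclog, eventually_ge_atTop 16] with n hn hn16
  have hn8 : 8 * Nat.clog 2 n ≤ n := by
    simp only [pow_one, Real.norm_natCast] at hn
    have h : (8 * Nat.clog 2 n : ℝ) ≤ n := by linarith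
    exact_mod_cast h
  calc 64 * (n + 8 * Nat.clog 2 n) ^ 2 ≤ 64 * (n + n) ^ 2 := by gcongr
    _ = 16 ^ 2 * n ^ 2 := by ring
    _ ≤ n ^ 2 * n ^ 2 := by gcongr
    _ = n ^ 4 := by ring
    _ ≤ (2 ^ Nat.clog 2 n) ^ 4 := by gcongr; exact Nat.le_pow_clog one_lt_two n
    _ = 2 ^ (4 * Nat.clog 2 n) := by rw [← pow_mul, mul_comm]

theorem eventually_clog_sq_add_le (a b c : ℝ) {ε : ℝ} (hε : 0 < ε) :
    ∀ᶠ n : ℕ in atTop, a * (Nat.clog 2 n : ℝ) ^ 2 + b * Nat.clog 2 n + c ≤ ε * n := by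
  have hconst : (fun _ : ℕ => c) =o[atTop] fun n : ℕ => (n : ℝ) :=
    (isLittleO_const_id_atTop c).comp_tendsto tendsto_natCast_atTop_atTop
  have hlin := isLittleO_clog_pow one_lt_two 1
  simp only [pow_one] at hlin
  have hsum := (((isLittleO_clog_pow one_lt_two 2).const_mul_left a).add
    (hlin.const_mul_left b)).add hconst
  filter_upwards [hsum.bound hε] with n hn
  rw [Real.norm_natCast] at hn
  exact (Real.le_norm_self _).trans hn

theorem eventually_exists_two_pow {ε : ℝ} (hε : 0 < ε) :
    ∀ᶠ Δ : ℕ in atTop, ∃ k s : ℕ, 64 * k ^ 2 ≤ 2 ^ s ∧ 64 * k * Δ ≤ 2 ^ (k - s) ∧ 2 * s < k ∧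
      ((k + 4 * s ^ 2 + 3 : ℕ) : ℝ) ≤ (1 + ε) * Real.logb 2 Δ := by
  have hclog := tendsto_clog_atTop one_lt_two
  filter_upwards [hclog.eventually eventually_mul_sq_le_two_pow_clog,
    hclog.eventually (eventually_clog_sq_add_le 64 8 (4 + ε) hε),
    hclog.eventually (eventually_gt_atTop 0)] with Δ hks hε' hn
  set n := Nat.clog 2 Δ
  set s := 4 * Nat.clog 2 n
  have hk : n + 8 * Nat.clog 2 n = n + 2 * s := by omega
  rw [hk] at hks
  refine ⟨n + 2 * s, s, hks, ?_, by omega, ?_⟩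
  · calc 64 * (n + 2 * s) * Δ ≤ 64 * (n + 2 * s) ^ 2 * 2 ^ n := by
          gcongr
          · exact Nat.le_self_pow two_ne_zero _
          · exact Nat.le_pow_clog one_lt_two Δ
      _ ≤ 2 ^ s * 2 ^ n := by gcongr
      _ = 2 ^ (n + 2 * s - s) := by rw [← pow_add]; congr 1; omega
  · have hlog : (n : ℝ) < Real.logb 2 Δ + 1 := by
      have hΔ : 1 ≤ Δ := Nat.one_le_iff_ne_zero.2 fun hΔ => hn.ne' (by simp [n, hΔ])
      have h := Nat.ceil_lt_add_one (Real.logb_nonneg one_lt_two (Nat.one_le_cast.2 hΔ))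
      rwa [← Nat.cast_ofNat (R := ℝ), Real.natCeil_logb_natCast] at h
    have h4s : (s : ℝ) = 4 * Nat.clog 2 n := by simp [s]
    push_cast
    nlinarith

end Asymptotics

theorem stmt12_general.{u} (ε : ℝ) (hε : 0 < ε) :
    ∃ Δε : ℕ, ∀ Δ ≥ Δε, ∀ (V : Type u) [Fintype V] (G : SimpleGraph V) [DecidableRel G.Adj],
      G.maxDegree ≤ Δ → (cfIndex G : ℝ) ≤ (1 + ε) * Real.logb 2 Δ := by
  obtain ⟨Δε, hΔε⟩ := Filter.eventually_atTop.1 (eventually_exists_two_pow hε)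
  refine ⟨Δε, fun Δ hΔ V _ G _ hG => ?_⟩
  obtain ⟨k, s, hks, hkΔ, hsk, hle⟩ := hΔε Δ hΔ
  classical
  have hinc : ∀ v, (G.incidenceSet v).ncard ≤ Δ := fun v => by
    rw [Set.ncard_eq_toFinset_card', ← incidenceFinset, card_incidenceFinset_eq_degree]
    exact (G.degree_le_maxDegree v).trans hG
  obtain ⟨c, hc⟩ := exists_conflictFree_of_two_pow G hinc hks hkΔ hsk
  have hcf : cfIndex G ≤ k + 4 * s ^ 2 + 3 := Nat.sInf_le ⟨c, hc⟩
  exact (Nat.cast_le.2 hcf).trans hle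

theorem stmt12 (ε : ℝ) (hε : 0 < ε) :
    ∃ Δε : ℕ, ∀ (V : Type) [Fintype V] (G : SimpleGraph V) [DecidableRel G.Adj],
      Δε ≤ G.maxDegree →
      (cfIndex G : ℝ) ≤ (1 + ε) * Real.logb 2 (G.maxDegree : ℝ) :=
  (stmt12_general ε hε).imp fun _ h V _ G _ hG => h _ hG V G le_rfl
end
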